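/- arXiv:1805.08135 — 2 statements merged into one kernel-verified Lean document; each statement's English description precedes it below -/
import Mathlib

section
/- Let n ≥ 2 be an integer and 0 < λ ≤ Λ real constants. Set σ := 1 − (λ/(λ+(n−1)Λ))^n · (1/(4√n))^n and M := 884736·n³·(36n)^{max{1, (n−1)Λ/λ − 1}}. Let Ω ⊆ ℝⁿ be an open set containing the closed ball of radius 2√n centered at 0, and let v : Ω → ℝ be a continuous viscosity supersolution of M⁻_{λ,Λ}(D²v) ≤ 0 in Ω. If G⁻₁(v,Ω) ∩ Q₃ ≠ ∅, then |G⁻_M(v,Ω) ∩ Q₁| ≥ (1−σ)·|Q₁|. -/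
open MeasureTheory Metric
open scoped InnerProductSpace ENNReal

noncomputable section

abbrev Euc (n : ℕ) := EuclideanSpace ℝ (Fin n)

/-- Loewner order -/
def matLE {n : ℕ} (A B : Matrix (Fin n) (Fin n) ℝ) : Prop := (B - A).PosSemidef

/-- Pucci minimal operator -/
def pucciInf {n : ℕ} (lam Lam : ℝ) (M : Matrix (Fin n) (Fin n) ℝ) : ℝ :=
  sInf {t : ℝ | ∃ A : Matrix (Fin n) (Fin n) ℝ,
    A.IsSymm ∧ matLE (lam • 1) A ∧ matLE A (Lam • 1) ∧ t = (A * M).trace}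

/-- Hessian matrix via second iterated Fréchet derivative -/
def hessianMatrix {n : ℕ} (φ : Euc n → ℝ) (x : Euc n) : Matrix (Fin n) (Fin n) ℝ :=
  Matrix.of fun i j =>
    iteratedFDeriv ℝ 2 φ x ![EuclideanSpace.single i 1, EuclideanSpace.single j 1]

/-- viscosity supersolution of M⁻(D²v) ≤ 0 -/
def ViscSupersol {n : ℕ} (lam Lam : ℝ) (Ω : Set (Euc n)) (v : Euc n → ℝ) : Prop :=
  ∀ x₀ ∈ Ω, ∀ φ : Euc n → ℝ,
    (∃ U : Set (Euc n), IsOpen U ∧ x₀ ∈ U ∧ ContDiffOn ℝ 2 φ U) →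
    IsLocalMinOn (fun x => v x - φ x) Ω x₀ →
    pucciInf lam Lam (hessianMatrix φ x₀) ≤ 0

def Gm {n : ℕ} (K : ℝ) (v : Euc n → ℝ) (Ω : Set (Euc n)) : Set (Euc n) :=
  {xb | xb ∈ Ω ∧ ∃ p : Euc n, ∀ x ∈ Ω, v x ≥ v xb + ⟪p, x - xb⟫_ℝ - K / 2 * ‖x - xb‖ ^ 2}

def Am {n : ℕ} (K : ℝ) (v : Euc n → ℝ) (Ω : Set (Euc n)) : Set (Euc n) := Ω \ Gm K v Ω

/-- open cube of side r centered at x -/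
def cube {n : ℕ} (r : ℝ) (x : Euc n) : Set (Euc n) := {y | ∀ i, |y i - x i| < r / 2}

theorem psd_quad_le_trace {n : ℕ} (B : Matrix (Fin n) (Fin n) ℝ) (hB : B.PosSemidef)
    (e : Fin n → ℝ) (he : ∑ i, e i ^ 2 = 1) :
    e ⬝ᵥ (B.mulVec e) ≤ B.trace := by
  obtain ⟨m, C, rfl⟩ := (Matrix.posSemidef_iff_eq_sum_vecMulVec (𝕜 := ℝ)).mp hB
  rw [Matrix.sum_mulVec, dotProduct_sum, Matrix.trace_sum]
  refine Finset.sum_le_sum fun k _ => ?_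
  rw [Matrix.vecMulVec_mulVec, Matrix.trace_vecMulVec]
  have h := Finset.sum_mul_sq_le_sq_mul_sq Finset.univ (C k) e
  rw [he, mul_one] at h
  simp only [dotProduct, star_trivial, Pi.smul_apply, MulOpposite.smul_eq_mul_unop,
    MulOpposite.unop_op, ← mul_assoc]
  rw [← Finset.sum_mul]
  calc _ = (∑ i, C k i * e i) ^ 2 := by
        rw [sq]; congr 1; exact Finset.sum_congr rfl fun i _ => mul_comm _ _
    _ ≤ _ := h
    _ = _ := Finset.sum_congr rfl fun i _ => sq _

/-- Quadratic test function. -/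
def quadT {n : ℕ} (p e x1 : Euc n) (a b : ℝ) (x : Euc n) : ℝ :=
  ⟪p, x - x1⟫_ℝ + a / 2 * ⟪e, x - x1⟫_ℝ ^ 2 - b / 2 * ‖x - x1‖ ^ 2

theorem quadT_contDiff {n : ℕ} (p e x1 : Euc n) (a b : ℝ) :
    ContDiff ℝ 2 (quadT p e x1 a b) := by
  unfold quadT
  have h : ContDiff ℝ 2 (fun x : Euc n => x - x1) := contDiff_id.sub contDiff_const
  exact ((contDiff_const.inner ℝ h).add (contDiff_const.mul ((contDiff_const.inner ℝ h).pow 2))).sub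
    (contDiff_const.mul (h.norm_sq ℝ))

theorem quadT_fderiv {n : ℕ} (p e x1 : Euc n) (a b : ℝ) :
    fderiv ℝ (quadT p e x1 a b) = fun x => innerSL ℝ p + (a * ⟪e, x - x1⟫_ℝ) • innerSL ℝ e
      - b • innerSL ℝ (x - x1) := by
  funext x
  apply HasFDerivAt.fderiv
  unfold quadT
  have h : HasFDerivAt (fun x : Euc n => x - x1) (ContinuousLinearMap.id ℝ (Euc n)) x :=
    (hasFDerivAt_id x).sub_const x1
  have hi : ∀ q : Euc n, HasFDerivAt (fun x : Euc n => ⟪q, x - x1⟫_ℝ) (innerSL ℝ q) x := by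
    intro q
    exact (innerSL ℝ q).hasFDerivAt.comp x h
  have h3 := h.norm_sq
  refine HasFDerivAt.congr_fderiv (((hi p).add (((hi e).pow 2).const_mul (a/2))).sub
    (h3.const_mul (b/2))) ?_
  ext y
  simp
  ring

theorem quadT_hessian {n : ℕ} (p e x1 : Euc n) (a b : ℝ) (x : Euc n) :
    hessianMatrix (quadT p e x1 a b) x = 
      a • Matrix.vecMulVec (fun i => e i) (fun i => e i) - b • (1 : Matrix (Fin n) (Fin n) ℝ) := by
  ext i j
  simp only [hessianMatrix, Matrix.of_apply]
  rw [iteratedFDeriv_two_apply, quadT_fderiv]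
  have h : HasFDerivAt (fun x : Euc n => x - x1) (ContinuousLinearMap.id ℝ (Euc n)) x :=
    (hasFDerivAt_id x).sub_const x1
  have hi : ∀ q : Euc n, HasFDerivAt (fun x : Euc n => ⟪q, x - x1⟫_ℝ) (innerSL ℝ q) x := by
    intro q
    exact (innerSL ℝ q).hasFDerivAt.comp x h
  have h4 : HasFDerivAt (fun x : Euc n => innerSL ℝ (x - x1)) (innerSL ℝ : Euc n →L[ℝ] _) x :=
    ContinuousLinearMap.hasFDerivAt (innerSL ℝ : Euc n →L[ℝ] _) |>.comp x h
  have h5 := ((((hi e).const_mul a).smul_const (innerSL ℝ e)).const_add (innerSL ℝ p)).sub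
    (h4.const_smul b)
  have h6 : fderiv ℝ (fun x => innerSL ℝ p + (a * ⟪e, x - x1⟫_ℝ) • innerSL ℝ e - b • innerSL ℝ (x - x1)) x = _ := h5.fderiv
  rw [h6]
  simp [Matrix.vecMulVec_apply, Matrix.one_apply, EuclideanSpace.inner_single_right]
  rw [innerSL_apply_apply, EuclideanSpace.inner_single_left]
  by_cases hij : i = j
  · simp [hij]; ring
  · simp [hij]; ring

theorem visc_quad {n : ℕ} {lam Lam : ℝ} (hlam : 0 < lam) (hLam : lam ≤ Lam)
    {Ω : Set (Euc n)} {v : Euc n → ℝ} (hn : 2 ≤ n) (hsuper : ViscSupersol lam Lam Ω v)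
    (p e x1 x0 : Euc n) (a b : ℝ) (hb : 0 ≤ b) (he : ‖e‖ = 1) (hx0 : x0 ∈ Ω)
    (hmin : IsLocalMinOn (fun x => v x - quadT p e x1 a b x) Ω x0) :
    lam * a ≤ (lam + ((n : ℝ) - 1) * Lam) * b := by
  have hn' : (2 : ℝ) ≤ n := by exact_mod_cast hn
  by_cases hab : a < b
  · nlinarith [mul_nonneg (mul_nonneg (by linarith : (0:ℝ) ≤ (n:ℝ) - 1) (hlam.le.trans hLam)) hb]
  push Not at hab
  have h := hsuper x0 hx0 _ ⟨Set.univ, isOpen_univ, trivial, (quadT_contDiff p e x1 a b).contDiffOn⟩ hmin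
  rw [quadT_hessian] at h
  have he2 : ∑ i, e i ^ 2 = 1 := by
    have := EuclideanSpace.real_norm_sq_eq e
    rw [he] at this; simpa using this.symm
  have key : (a - b) * lam - b * ((n : ℝ) - 1) * Lam ≤ 0 := by
    refine le_trans (le_csInf ?_ ?_) h
    · refine ⟨_, lam • 1, ?_, ?_, ?_, rfl⟩
      · simp [Matrix.IsSymm]
      · simp [matLE, Matrix.PosSemidef.zero]
      · rw [matLE, ← sub_smul]
        exact Matrix.PosSemidef.one.smul (by linarith)
    · rintro t ⟨A, hA, h1, h2, rfl⟩
      have hee : (fun i => e i) ⬝ᵥ (fun i => e i) = 1 := by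
        simpa [dotProduct, sq] using he2
      have e1 := psd_quad_le_trace _ h2 (fun i => e i) he2
      have e2 := h1.dotProduct_mulVec_nonneg (fun i => e i)
      simp only [Matrix.sub_mulVec, dotProduct_sub, Matrix.smul_mulVec, Matrix.one_mulVec,
        dotProduct_smul, star_trivial, hee, Matrix.trace_sub, Matrix.trace_smul, Matrix.trace_one,
        Fintype.card_fin, smul_eq_mul, mul_one] at e1 e2
      have e3 : (A * (a • Matrix.vecMulVec (fun i => e i) (fun i => e i) - b • (1 : Matrix (Fin n) (Fin n) ℝ))).trace
        = a * ((fun i => e i) ⬝ᵥ (A.mulVec (fun i => e i))) - b * A.trace := by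
        rw [mul_sub, Matrix.trace_sub, Matrix.mul_smul, Matrix.trace_smul, Matrix.mul_smul, Matrix.trace_smul,
          Matrix.mul_vecMulVec, Matrix.trace_vecMulVec, dotProduct_comm]
        simp
      rw [e3]
      nlinarith
  linarith

theorem core_contra {n : ℕ} {lam Lam : ℝ} (hlam : 0 < lam) (hLam : lam ≤ Lam)
    {Ω : Set (Euc n)} {v : Euc n → ℝ} (hn : 2 ≤ n) (hv : ContinuousOn v Ω)
    (hsuper : ViscSupersol lam Lam Ω v)
    (k : ℝ) (hk1 : 0 < k) (hk : lam * k = lam + ((n : ℝ) - 1) * Lam)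
    (M : ℝ) (hM : 0 < M) (x1 p e : Euc n) (he : ‖e‖ = 1)
    (hball : closedBall x1 1 ⊆ Ω)
    (ρ m : ℝ) (hρ : 0 < ρ) (hρ0 : 100 * k * ρ ^ 2 < 1) (hm : 17 / 16 * k * M * ρ < m)
    (F1 : ∀ y ∈ Ω, v x1 + ⟪p, y - x1⟫_ℝ - M / 2 * ‖y - x1‖ ^ 2 ≤ v y)
    (F2 : ∀ y ∈ Ω, v x1 + ⟪p, y - x1⟫_ℝ - M / 2 * ‖y - x1‖ ^ 2
      + m * (⟪e, y - x1⟫_ℝ - ρ / 2) ≤ v y) : False := by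
  set a : ℝ := k * (33 / 32) * M with ha
  set b : ℝ := M + M / 64 with hb
  have ha0 : 0 < a := by positivity
  set θ : ℝ := a * ρ / 100 with hθ
  set f : Euc n → ℝ := fun x => ⟪e, x - x1⟫_ℝ with hf
  have hfc : Continuous f := by fun_prop
  set S : Set (Euc n) := closedBall x1 1 ∩ f ⁻¹' (Set.Icc (-(ρ / 50)) ρ) with hS
  have hSc : IsCompact S := (isCompact_closedBall x1 1).inter_right (isClosed_Icc.preimage hfc)
  have hSΩ : S ⊆ Ω := fun x hx => hball hx.1
  have hx1S : x1 ∈ S := by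
    refine ⟨mem_closedBall_self zero_le_one, ?_⟩
    simp only [hf, Set.mem_preimage, sub_self, inner_zero_right, Set.mem_Icc]
    constructor <;> linarith
  have hgc : ContinuousOn (fun x => v x - quadT (p + θ • e) e x1 a b x) S :=
    (hv.mono hSΩ).sub (quadT_contDiff _ _ _ _ _).continuous.continuousOn
  obtain ⟨x0, hx0S, hmin⟩ := hSc.exists_isMinOn ⟨x1, hx1S⟩ hgc
  have h1 := hmin hx1S
  simp only [quadT, Set.mem_ofPred_eq, sub_self, inner_zero_right, norm_zero, inner_add_left,
    inner_smul_left, conj_trivial] at h1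
  have hx0Ω := hSΩ hx0S
  have f1 := F1 x0 hx0Ω
  have f2 := F2 x0 hx0Ω
  have hs1 := hx0S.2.1
  have hs2 := hx0S.2.2
  have hN := hx0S.1
  rw [mem_closedBall, dist_eq_norm] at hN
  simp only [hf] at hs1 hs2
  have hcs := abs_real_inner_le_norm e (x0 - x1)
  rw [he, one_mul] at hcs
  set s := ⟪e, x0 - x1⟫_ℝ with hsdef
  set N := ‖x0 - x1‖ with hNdef
  have hN0 : 0 ≤ N := norm_nonneg _
  have hsN : s ^ 2 ≤ N ^ 2 := by
    rw [← sq_abs s]; gcongr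
  have hMkρ : 100 * k * ρ ^ 2 * M < M := by nlinarith
  have haρ : a * ρ ^ 2 = k * ρ ^ 2 * M * (33 / 32) := by rw [ha]; ring
  have hs2sq : s ^ 2 ≤ ρ ^ 2 := by nlinarith
  have hθs : θ * s ≤ a * ρ ^ 2 / 100 := by
    have : θ * s ≤ θ * ρ := mul_le_mul_of_nonneg_left hs2 (by positivity)
    rw [hθ] at this ⊢; nlinarith
  have hbN : b / 2 * N ^ 2 = M / 2 * N ^ 2 + M / 64 * N ^ 2 / 2 := by rw [hb]; ring
  have c1 : N < 1 := by
    rcases lt_or_eq_of_le hN with h | h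
    · exact h
    exfalso
    rw [h] at f1 h1 hbN
    have : a / 2 * s ^ 2 ≤ a / 2 * ρ ^ 2 := by gcongr
    have hkm : 0 < k * ρ ^ 2 * M := by positivity
    linarith
  have c2 : s < ρ := by
    rcases lt_or_eq_of_le hs2 with h | h
    · exact h
    exfalso
    rw [h] at f2 h1 hθs
    have hN2 : 0 ≤ M / 64 * N ^ 2 := by positivity
    have hmr : 17 / 16 * k * M * ρ * ρ < m * ρ := by gcongr
    have hkm : 0 < k * ρ ^ 2 * M := by positivity
    linarith
  have c3 : -(ρ / 50) < s := by
    rcases lt_or_eq_of_le hs1 with h | h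
    · exact h
    exfalso
    have hs0 : 0 < s ^ 2 := by 
      have : s ≠ 0 := by rw [← h]; exact (by linarith : -(ρ / 50) < 0).ne
      positivity
    have hN2 : 0 < M / 64 * N ^ 2 := by
      have : 0 < N ^ 2 := lt_of_lt_of_le hs0 hsN
      positivity
    have : θ * s + a / 2 * s ^ 2 = 0 := by rw [← h, hθ]; ring
    linarith
  have hnhds : S ∈ nhds x0 := by
    refine Filter.inter_mem ?_ ?_
    · exact Filter.mem_of_superset (isOpen_ball.mem_nhds (by rwa [mem_ball, dist_eq_norm]))
        ball_subset_closedBall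
    · exact hfc.continuousAt.preimage_mem_nhds (Icc_mem_nhds c3 c2)
  have hloc : IsLocalMinOn (fun x => v x - quadT (p + θ • e) e x1 a b x) Ω x0 :=
    (hmin.isLocalMin hnhds).on Ω
  have := visc_quad hlam hLam hn hsuper _ e x1 x0 a b (by positivity) he hx0Ω hloc
  rw [← hk, ha, hb] at this
  have : 0 < lam * k * M := by positivity
  nlinarith

theorem lip_half {n : ℕ} {lam Lam : ℝ} (hlam : 0 < lam) (hLam : lam ≤ Lam)
    {Ω : Set (Euc n)} {v : Euc n → ℝ} (hn : 2 ≤ n) (hv : ContinuousOn v Ω)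
    (hsuper : ViscSupersol lam Lam Ω v)
    (k : ℝ) (hk1 : 0 < k) (hk : lam * k = lam + ((n : ℝ) - 1) * Lam)
    (M : ℝ) (hM : 0 < M) (x1 x2 q1 q2 : Euc n)
    (hball : closedBall x1 1 ⊆ Ω)
    (ρ : ℝ) (hρ : 0 < ρ) (hρ0 : 100 * k * ρ ^ 2 < 1)
    (F1 : ∀ y ∈ Ω, v x1 + ⟪q1, y - x1⟫_ℝ - M / 2 * (‖y‖ ^ 2 - ‖x1‖ ^ 2) ≤ v y)
    (F2 : ∀ y ∈ Ω, v x2 + ⟪q2, y - x2⟫_ℝ - M / 2 * (‖y‖ ^ 2 - ‖x2‖ ^ 2) ≤ v y)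
    (hD : v x1 + M / 2 * ‖x1‖ ^ 2 - ‖q2 - q1‖ * ρ / 2 ≤ 
      v x2 + M / 2 * ‖x2‖ ^ 2 + ⟪q2, x1 - x2⟫_ℝ) :
    ‖q2 - q1‖ ≤ 17 / 16 * k * M * ρ := by
  by_contra hcon
  push Not at hcon
  have hm : 0 < ‖q2 - q1‖ := lt_trans (by positivity) hcon
  have hny : ∀ y : Euc n, ‖y‖ ^ 2 - ‖x1‖ ^ 2 = ‖y - x1‖ ^ 2 + 2 * ⟪x1, y - x1⟫_ℝ := by
    intro y
    have : y = (y - x1) + x1 := by abel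
    conv_lhs => rw [this, norm_add_sq_real, real_inner_comm]
    ring
  refine core_contra hlam hLam hn hv hsuper k hk1 hk M hM x1 (q1 - M • x1)
    (‖q2 - q1‖⁻¹ • (q2 - q1)) ?_ hball ρ ‖q2 - q1‖ hρ hρ0 hcon ?_ ?_
  · rw [norm_smul, norm_inv, norm_norm, inv_mul_cancel₀ hm.ne']
  · intro y hy
    have := F1 y hy
    rw [hny] at this
    rw [inner_sub_left, inner_smul_left]
    simp only [conj_trivial]
    linarith
  · intro y hy
    have h2 := F2 y hy
    have h3 := hny y
    have h4 : ⟪q2, y - x2⟫_ℝ = ⟪q2, y - x1⟫_ℝ + ⟪q2, x1 - x2⟫_ℝ := by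
      rw [← inner_add_right]; congr 1; abel
    rw [h4] at h2
    simp only [inner_sub_left, inner_smul_left, conj_trivial]
    rw [mul_sub, mul_inv_cancel_left₀ hm.ne']
    have h5 : M / 2 * ‖y‖ ^ 2 - M / 2 * ‖x1‖ ^ 2 = M / 2 * ‖y - x1‖ ^ 2 + M * ⟪x1, y - x1⟫_ℝ := by
      rw [← mul_sub, h3]; ring
    linarith

theorem lip_pair {n : ℕ} {lam Lam : ℝ} (hlam : 0 < lam) (hLam : lam ≤ Lam)
    {Ω : Set (Euc n)} {v : Euc n → ℝ} (hn : 2 ≤ n) (hv : ContinuousOn v Ω)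
    (hsuper : ViscSupersol lam Lam Ω v)
    (k : ℝ) (hk1 : 0 < k) (hk : lam * k = lam + ((n : ℝ) - 1) * Lam)
    (M : ℝ) (hM : 0 < M) (x1 x2 q1 q2 : Euc n)
    (hball1 : closedBall x1 1 ⊆ Ω) (hball2 : closedBall x2 1 ⊆ Ω)
    (ρ : ℝ) (hρ : 0 < ρ) (hρ0 : 100 * k * ρ ^ 2 < 1) (hx : ‖x1 - x2‖ ≤ ρ)
    (F1 : ∀ y ∈ Ω, v x1 + ⟪q1, y - x1⟫_ℝ - M / 2 * (‖y‖ ^ 2 - ‖x1‖ ^ 2) ≤ v y)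
    (F2 : ∀ y ∈ Ω, v x2 + ⟪q2, y - x2⟫_ℝ - M / 2 * (‖y‖ ^ 2 - ‖x2‖ ^ 2) ≤ v y) :
    ‖q1 - q2‖ ≤ 17 / 16 * k * M * ρ := by
  have hsum : -(‖q2 - q1‖ * ρ) ≤ ⟪q2, x1 - x2⟫_ℝ + ⟪q1, x2 - x1⟫_ℝ := by
    have h1 : ⟪q2, x1 - x2⟫_ℝ + ⟪q1, x2 - x1⟫_ℝ = ⟪q2 - q1, x1 - x2⟫_ℝ := by
      rw [inner_sub_left, ← neg_sub x1 x2, inner_neg_right]; ring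
    rw [h1]
    have h2 := abs_real_inner_le_norm (q2 - q1) (x1 - x2)
    have h3 : ‖q2 - q1‖ * ‖x1 - x2‖ ≤ ‖q2 - q1‖ * ρ := by gcongr
    linarith [(abs_le.mp h2).1]
  by_cases hD : v x1 + M / 2 * ‖x1‖ ^ 2 - ‖q2 - q1‖ * ρ / 2 ≤ 
      v x2 + M / 2 * ‖x2‖ ^ 2 + ⟪q2, x1 - x2⟫_ℝ
  · rw [norm_sub_rev]
    exact lip_half hlam hLam hn hv hsuper k hk1 hk M hM x1 x2 q1 q2 hball1 ρ hρ hρ0 F1 F2 hD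
  · refine lip_half hlam hLam hn hv hsuper k hk1 hk M hM x2 x1 q2 q1 hball2 ρ hρ hρ0 F2 F1 ?_
    push Not at hD
    rw [norm_sub_rev q1 q2]
    linarith

theorem rpow_taylor (γ A : ℝ) (hA : A < γ * (γ + 1)) :
    ∀ᶠ s in nhds (0 : ℝ), 1 - γ * s + A / 2 * s ^ 2 ≤ (1 + s) ^ (-γ) := by
  set g : ℝ → ℝ := fun s => (1 + s) ^ (-γ) - (1 - γ * s + A / 2 * s ^ 2) with hg
  have hd : ∀ᶠ s in nhds (0 : ℝ), HasDerivAt g (-γ * (1 + s) ^ (-γ - 1) - (-γ + A * s)) s := by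
    filter_upwards [lt_mem_nhds (show (-1 : ℝ) < 0 by norm_num)] with s hs
    have h1 : HasDerivAt (fun s : ℝ => 1 + s) 1 s := (hasDerivAt_id s).const_add 1
    have h2 := h1.rpow_const (p := -γ) (Or.inl (by linarith))
    have h3 : HasDerivAt (fun s : ℝ => 1 - γ * s + A / 2 * s ^ 2) (-γ + A * s) s := by
      have := (((hasDerivAt_id s).const_mul γ).const_sub 1).add (((hasDerivAt_id s).pow 2).const_mul (A / 2))
      refine this.congr_deriv ?_
      simp
      ring
    refine (h2.sub h3).congr_deriv ?_
    ring
  have hdd : HasDerivAt (deriv g) (γ * (γ + 1) - A) 0 := by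
    have e : deriv g =ᶠ[nhds 0] fun s => -γ * (1 + s) ^ (-γ - 1) - (-γ + A * s) := by
      filter_upwards [hd] with s hs using hs.deriv
    refine HasDerivAt.congr_of_eventuallyEq ?_ e
    have h1 : HasDerivAt (fun s : ℝ => 1 + s) 1 0 := (hasDerivAt_id 0).const_add 1
    have h2 := (h1.rpow_const (p := -γ - 1) (Or.inl (by norm_num))).const_mul (-γ)
    have h3 : HasDerivAt (fun s : ℝ => -γ + A * s) A 0 := by
      simpa using ((hasDerivAt_id (0:ℝ)).const_mul A).const_add (-γ)
    refine (h2.sub h3).congr_deriv ?_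
    simp
    ring
  have h0 := hd.self_of_nhds
  have hmin : IsLocalMin g 0 := by
    apply isLocalMin_of_deriv_deriv_pos
    · rw [hdd.deriv]; linarith
    · rw [h0.deriv]; simp
    · exact h0.continuousAt
  filter_upwards [hmin] with s hs
  simp [hg] at hs
  linarith

theorem barrier_contra {n : ℕ} {lam Lam : ℝ} (hlam : 0 < lam) (hLam : lam ≤ Lam)
    {Ω : Set (Euc n)} {v : Euc n → ℝ} (hn : 2 ≤ n)
    (hsuper : ViscSupersol lam Lam Ω v)
    (k : ℝ) (hk : lam * k = lam + ((n : ℝ) - 1) * Lam)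
    (γ : ℝ) (hγ : 1 ≤ γ) (hkγ : k ≤ γ + 2) (p xb x0 : Euc n) (hx0 : x0 ∈ Ω) (hr : 0 < ‖x0‖)
    (c v0 : ℝ) (hC : 8 ≤ c * (‖x0‖ ^ 2) ^ (-γ) / ‖x0‖ ^ 2)
    (hmin : IsLocalMin (fun x => v x - (v0 + ⟪p, x - xb⟫_ℝ - 1 / 2 * ‖x - xb‖ ^ 2
      + c * (‖x‖ ^ 2) ^ (-γ))) x0) : False := by
  set r := ‖x0‖ with hrdef
  set T := (r ^ 2) ^ (-γ) with hT
  set C := c * T / r ^ 2 with hCdef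
  set A := γ ^ 2 + 3 / 4 * γ with hA
  have hA0 : 0 < A := by positivity
  have hC0 : 0 < C := by linarith
  have hcT : c * T = C * r ^ 2 := by rw [hCdef]; field_simp
  have htay := rpow_taylor γ A (by rw [hA]; nlinarith)
  have hs0 : Filter.Tendsto (fun x : Euc n => (‖x‖ ^ 2 - r ^ 2) / r ^ 2) (nhds x0) (nhds 0) := by
    have : Continuous (fun x : Euc n => (‖x‖ ^ 2 - r ^ 2) / r ^ 2) := by fun_prop
    have h := this.tendsto x0
    simpa [← hrdef] using h
  have ev1 := hs0.eventually htay
  have hnear : ∀ᶠ x in nhds x0, ‖x - x0‖ < r / (4 * A * C) := by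
    have : ball x0 (r / (4 * A * C)) ∈ nhds x0 := ball_mem_nhds _ (by positivity)
    filter_upwards [this] with x hx
    rwa [mem_ball, dist_eq_norm] at hx
  have hlow : ∀ᶠ x in nhds x0,
      quadT (p - (x0 - xb) - (2 * γ * C) • x0) (r⁻¹ • x0) x0 (4 * A * C) (2 + 2 * γ * C) x ≤
      (v0 + ⟪p, x - xb⟫_ℝ - 1 / 2 * ‖x - xb‖ ^ 2 + c * (‖x‖ ^ 2) ^ (-γ)) -
      (v0 + ⟪p, x0 - xb⟫_ℝ - 1 / 2 * ‖x0 - xb‖ ^ 2 + c * (‖x0‖ ^ 2) ^ (-γ)) := by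
    filter_upwards [ev1, hnear] with x h1 h2
    have hx : x = x0 + (x - x0) := by abel
    have hxb : x - xb = (x0 - xb) + (x - x0) := by abel
    set h := x - x0 with hh
    set d := ⟪x0, h⟫_ℝ with hd
    set N := ‖h‖ with hN
    have hN0 : 0 ≤ N := norm_nonneg _
    have hnx : ‖x‖ ^ 2 = r ^ 2 + 2 * d + N ^ 2 := by
      rw [hx, norm_add_sq_real]
    set s := (‖x‖ ^ 2 - r ^ 2) / r ^ 2 with hs
    have hsr : ‖x‖ ^ 2 = r ^ 2 * (1 + s) := by rw [hs]; field_simp; ring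
    have h1s : 0 ≤ 1 + s := by
      have h5 : 0 ≤ r ^ 2 * (1 + s) := by rw [← hsr]; positivity
      exact nonneg_of_mul_nonneg_right h5 (by positivity)
    have hsd : s * r ^ 2 = 2 * d + N ^ 2 := by
      rw [hs, hnx]; field_simp; ring
    have hpow : c * (‖x‖ ^ 2) ^ (-γ) = C * r ^ 2 * (1 + s) ^ (-γ) := by
      rw [hsr, Real.mul_rpow (by positivity) h1s, ← mul_assoc, ← hT, hcT]
    have hpow0 : c * (‖x0‖ ^ 2) ^ (-γ) = C * r ^ 2 := hcT
    have hge : C * r ^ 2 * (1 - γ * s + A / 2 * s ^ 2) ≤ C * r ^ 2 * (1 + s) ^ (-γ) := by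
      gcongr
    have hdabs : |d| ≤ r * N := abs_real_inner_le_norm _ _
    have hexp : C * r ^ 2 * (1 - γ * s + A / 2 * s ^ 2) =
        C * r ^ 2 - γ * C * (2 * d + N ^ 2) + A * C / (2 * r ^ 2) * (2 * d + N ^ 2) ^ 2 := by
      rw [← hsd]; field_simp
    have hcub : 2 * A * C * (d ^ 2 / r ^ 2) - N ^ 2 / 2 ≤ A * C / (2 * r ^ 2) * (2 * d + N ^ 2) ^ 2 := by
      have e1 : A * C / (2 * r ^ 2) * (2 * d + N ^ 2) ^ 2 =
        2 * A * C * (d ^ 2 / r ^ 2) + 2 * A * C / r ^ 2 * (d * N ^ 2) + A * C / (2 * r ^ 2) * N ^ 4 := by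
        field_simp; ring
      have e2 : 0 ≤ A * C / (2 * r ^ 2) * N ^ 4 := by positivity
      have e3 : -(r * N * N ^ 2) ≤ d * N ^ 2 := by
        have := (abs_le.mp hdabs).1
        nlinarith [sq_nonneg N]
      have e4 : 2 * A * C / r ^ 2 * (-(r * N * N ^ 2)) ≤ 2 * A * C / r ^ 2 * (d * N ^ 2) := by
        gcongr
      have e5 : 2 * A * C / r ^ 2 * (r * N * N ^ 2) ≤ N ^ 2 / 2 := by
        have e6 : N * (4 * A * C) ≤ r := by
          rw [lt_div_iff₀ (by positivity)] at h2; exact h2.le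
        have e7 : 2 * A * C / r ^ 2 * (r * N * N ^ 2) = (N * (4 * A * C)) / r * (N ^ 2 / 2) := by
          field_simp; ring
        rw [e7]
        have e8 : (N * (4 * A * C)) / r ≤ 1 := by rw [div_le_one hr]; exact e6
        have := mul_le_mul_of_nonneg_right e8 (show 0 ≤ N ^ 2 / 2 by positivity)
        linarith
      linarith
    have hxbn : ‖x - xb‖ ^ 2 = ‖x0 - xb‖ ^ 2 + 2 * ⟪x0 - xb, h⟫_ℝ + N ^ 2 := by
      rw [hxb, norm_add_sq_real]
    have hpx : ⟪p, x - xb⟫_ℝ = ⟪p, x0 - xb⟫_ℝ + ⟪p, h⟫_ℝ := by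
      rw [hxb, inner_add_right]
    rw [hpow, hpow0, hxbn, hpx, quadT, ← hh, inner_sub_left, inner_sub_left, inner_smul_left,
      inner_smul_left]
    simp only [conj_trivial]
    rw [← hd, ← hN]
    have hed : (r⁻¹ * d) ^ 2 = d ^ 2 / r ^ 2 := by field_simp
    rw [hed]
    linarith
  have hloc : IsLocalMinOn (fun x => v x -
      quadT (p - (x0 - xb) - (2 * γ * C) • x0) (r⁻¹ • x0) x0 (4 * A * C) (2 + 2 * γ * C) x) Ω x0 := by
    apply IsLocalMin.on
    filter_upwards [hmin, hlow] with x hx1 hx2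
    have h0 : quadT (p - (x0 - xb) - (2 * γ * C) • x0) (r⁻¹ • x0) x0 (4 * A * C) (2 + 2 * γ * C) x0 = 0 := by
      simp [quadT]
    rw [h0]
    linarith
  have hfin := visc_quad hlam hLam hn hsuper _ _ x0 x0 _ _ (by positivity)
    (by rw [norm_smul, norm_inv, Real.norm_of_nonneg hr.le, inv_mul_cancel₀ hr.ne']) hx0 hloc
  rw [← hk, mul_assoc lam k] at hfin
  have hfin2 := le_of_mul_le_mul_left hfin hlam
  have h3 : k * (2 + 2 * γ * C) ≤ (γ + 2) * (2 + 2 * γ * C) := by gcongr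
  have h4 : 0 ≤ (2 * γ ^ 2 - 2 * γ) * C := by
    apply mul_nonneg _ hC0.le; nlinarith
  have h5 : γ * 8 ≤ γ * C := by gcongr
  rw [hA] at hfin2
  nlinarith

theorem exists_low_point {n : ℕ} {lam Lam : ℝ} (hlam : 0 < lam) (hLam : lam ≤ Lam)
    {Ω : Set (Euc n)} {v : Euc n → ℝ} (hn : 2 ≤ n) (hv : ContinuousOn v Ω)
    (hB : closedBall 0 (2 * Real.sqrt n) ⊆ Ω)
    (hsuper : ViscSupersol lam Lam Ω v)
    (k : ℝ) (hk : lam * k = lam + ((n : ℝ) - 1) * Lam)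
    (γ : ℝ) (hγ : 1 ≤ γ) (hkγ : k ≤ γ + 2) (p xb : Euc n) (hxb : ‖xb‖ ^ 2 < 9 * n / 4)
    (hG : ∀ x ∈ Ω, v xb + ⟪p, x - xb⟫_ℝ - 1 / 2 * ‖x - xb‖ ^ 2 ≤ v x) :
    ∃ z : Euc n, ‖z‖ ≤ 1 / 4 ∧ 
      v z ≤ v xb + ⟪p, z - xb⟫_ℝ - 1 / 2 * ‖z - xb‖ ^ 2 + 18 * n * (36 * (n : ℝ)) ^ γ := by
  have hn' : (2 : ℝ) ≤ n := by exact_mod_cast hn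
  by_cases hsmall : ‖xb‖ ≤ 1 / 4
  · refine ⟨xb, hsmall, ?_⟩
    simp; positivity
  push Not at hsmall
  by_contra hcon
  push Not at hcon
  set R2 : ℝ := 9 * n / 4 with hR2
  have hR20 : 0 < R2 := by positivity
  set c := 8 * R2 ^ (γ + 1) with hc
  have hc0 : 0 < c := by positivity
  set ψ : Euc n → ℝ := fun x => (v xb - c * R2 ^ (-γ)) + ⟪p, x - xb⟫_ℝ - 1 / 2 * ‖x - xb‖ ^ 2
      + c * (‖x‖ ^ 2) ^ (-γ) with hψ
  set S : Set (Euc n) := (fun x : Euc n => ‖x‖ ^ 2) ⁻¹' (Set.Icc (1 / 16) R2) with hS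
  have hnc : Continuous (fun x : Euc n => ‖x‖ ^ 2) := by fun_prop
  have hSsub : S ⊆ closedBall 0 (2 * Real.sqrt n) := by
    intro x hx
    rw [mem_closedBall, dist_zero_right]
    refine le_of_sq_le_sq ?_ (by positivity)
    rw [mul_pow, Real.sq_sqrt (by positivity)]
    have := hx.2
    simp only [hR2] at this
    linarith
  have hSΩ := hSsub.trans hB
  have hSc : IsCompact S := (isCompact_closedBall (0 : Euc n) _).of_isClosed_subset
    (isClosed_Icc.preimage hnc) hSsub
  have hxbS : xb ∈ S := ⟨by nlinarith, hxb.le⟩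
  have hψc : ContinuousOn ψ S := by
    have h1 : ContinuousOn (fun x : Euc n => (‖x‖ ^ 2) ^ (-γ)) S := by
      refine hnc.continuousOn.rpow_const ?_
      intro x hx
      left
      have := hx.1
      linarith
    have h2 : Continuous (fun x : Euc n => (v xb - c * R2 ^ (-γ)) + ⟪p, x - xb⟫_ℝ - 1 / 2 * ‖x - xb‖ ^ 2) := by
      fun_prop
    exact h2.continuousOn.add (continuousOn_const.mul h1)
  obtain ⟨x0, hx0S, hmin⟩ := hSc.exists_isMinOn ⟨xb, hxbS⟩ ((hv.mono hSΩ).sub hψc)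
  have h1 : v x0 - ψ x0 ≤ v xb - ψ xb := hmin hxbS
  have hxbval : v xb - ψ xb < 0 := by
    have : R2 ^ (-γ) < (‖xb‖ ^ 2) ^ (-γ) :=
      Real.rpow_lt_rpow_of_neg (by nlinarith) hxb (by linarith)
    have := mul_lt_mul_of_pos_left this hc0
    simp [hψ]
    linarith
  have hx0a := hx0S.1
  have hx0b := hx0S.2
  simp only at hx0a hx0b
  have c1 : ‖x0‖ ^ 2 < R2 := by
    rcases lt_or_eq_of_le hx0b with h | h
    · exact h
    exfalso
    have := hG x0 (hSΩ hx0S)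
    simp only [hψ] at h1 hxbval
    rw [h] at h1
    linarith
  have c2 : 1 / 16 < ‖x0‖ ^ 2 := by
    rcases lt_or_eq_of_le hx0a with h | h
    · exact h
    exfalso
    have hx4 : ‖x0‖ ≤ 1 / 4 := by nlinarith [norm_nonneg x0]
    have := hcon x0 hx4
    have hval : c * (‖x0‖ ^ 2) ^ (-γ) = 18 * n * (36 * (n : ℝ)) ^ γ := by
      rw [← h, hc, Real.rpow_add hR20, Real.rpow_one, one_div, Real.inv_rpow (by norm_num),
        Real.rpow_neg (by norm_num), inv_inv]
      have : (36 * (n : ℝ)) = R2 * 16 := by rw [hR2]; ring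
      rw [this, Real.mul_rpow hR20.le (by norm_num), hR2]
      ring
    have h0 : 0 < c * R2 ^ (-γ) := by positivity
    simp only [hψ] at h1 hxbval
    rw [hval] at h1
    linarith
  have hr : 0 < ‖x0‖ := by
    by_contra hh
    have : ‖x0‖ = 0 := le_antisymm (not_lt.mp hh) (norm_nonneg _)
    rw [this] at c2; norm_num at c2
  refine barrier_contra hlam hLam hn hsuper k hk γ hγ hkγ p xb x0 (hSΩ hx0S) hr c
    (v xb - c * R2 ^ (-γ)) ?_ ?_
  · rw [hc]
    have e1 : R2 ^ (-γ - 1) ≤ (‖x0‖ ^ 2) ^ (-γ - 1) :=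
      Real.rpow_le_rpow_of_nonpos (by positivity) c1.le (by linarith)
    rw [mul_div_assoc, ← Real.rpow_sub_one (by positivity), mul_assoc]
    have e2 : R2 ^ (γ + 1) * R2 ^ (-γ - 1) = 1 := by
      rw [← Real.rpow_add hR20]; ring_nf; simp
    have e3 : R2 ^ (γ + 1) * R2 ^ (-γ - 1) ≤ R2 ^ (γ + 1) * (‖x0‖ ^ 2) ^ (-γ - 1) := by gcongr
    linarith
  · exact hmin.isLocalMin (hnc.continuousAt.preimage_mem_nhds (Icc_mem_nhds c2 c1))

theorem volume_le_of_antilip {n : ℕ} (s : Set (Euc n)) (g : Euc n → Euc n) (K : NNReal)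
    (h : ∀ a ∈ s, ∀ b ∈ s, dist a b ≤ K * dist (g a) (g b)) :
    volume s ≤ (K : ℝ≥0∞) ^ n * volume (g '' s) := by
  classical
  have hinj : Set.InjOn g s := by
    intro a ha b hb hab
    have := h a ha b hb
    rw [hab, dist_self, mul_zero] at this
    exact dist_le_zero.mp this
  have hlip : LipschitzOnWith K (Function.invFunOn g s) (g '' s) := by
    apply LipschitzOnWith.of_dist_le_mul
    rintro _ ⟨a, ha, rfl⟩ _ ⟨b, hb, rfl⟩
    rw [hinj.leftInvOn_invFunOn ha, hinj.leftInvOn_invFunOn hb]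
    exact h a ha b hb
  have h1 := hlip.hausdorffMeasure_image_le (d := (n : ℝ)) (by positivity)
  rw [hinj.leftInvOn_invFunOn.image_image, ENNReal.rpow_natCast] at h1
  have : Measure.IsAddHaarMeasure (Measure.hausdorffMeasure (X := Euc n) (n : ℝ)) := by
    have := isAddHaarMeasure_hausdorffMeasure (E := Euc n)
    rwa [finrank_euclideanSpace_fin] at this
  have h2 := Measure.isAddLeftInvariant_eq_smul (volume : Measure (Euc n))
    (Measure.hausdorffMeasure (X := Euc n) (n : ℝ))
  rw [h2, Measure.smul_apply, Measure.smul_apply, mul_smul_comm]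
  gcongr

theorem volume_le_of_local_antilip {n : ℕ} (s : Set (Euc n)) (g : Euc n → Euc n) (K : NNReal)
    (ρ : ℝ) (hρ : 0 < ρ) (W : Set (Euc n)) (hW : ∀ a ∈ s, g a ∈ W)
    (h : ∀ a ∈ s, ∀ b ∈ s, dist (g a) (g b) < ρ → dist a b ≤ K * dist (g a) (g b)) :
    volume s ≤ (K : ℝ≥0∞) ^ n * volume W := by
  classical
  set P : ℕ → Set (Euc n) := disjointed fun i => ball (TopologicalSpace.denseSeq (Euc n) i) (ρ / 2)
  have hPsub : ∀ i, P i ⊆ ball (TopologicalSpace.denseSeq (Euc n) i) (ρ / 2) := fun i =>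
    disjointed_subset (fun i => ball (TopologicalSpace.denseSeq (Euc n) i) (ρ / 2)) i
  have hPm : ∀ i, MeasurableSet (P i) := fun i =>
    MeasurableSet.disjointed (fun j => measurableSet_ball) i
  have hPU : ⋃ i, P i = Set.univ := by
    rw [iUnion_disjointed]
    refine Set.eq_univ_of_forall fun x => ?_
    obtain ⟨i, hi⟩ := (TopologicalSpace.denseRange_denseSeq (Euc n)).exists_dist_lt x (half_pos hρ)
    exact Set.mem_iUnion.mpr ⟨i, hi⟩
  have hs : s ⊆ ⋃ i, s ∩ g ⁻¹' P i := by
    intro x hx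
    have : g x ∈ ⋃ i, P i := by rw [hPU]; trivial
    obtain ⟨i, hi⟩ := Set.mem_iUnion.mp this
    exact Set.mem_iUnion.mpr ⟨i, hx, hi⟩
  have hpiece : ∀ i, volume (s ∩ g ⁻¹' P i) ≤ (K : ℝ≥0∞) ^ n * volume (P i ∩ W) := by
    intro i
    refine (volume_le_of_antilip _ g K ?_).trans ?_
    · rintro a ⟨ha, ha'⟩ b ⟨hb, hb'⟩
      refine h a ha b hb ?_
      have h1 := hPsub i ha'
      have h2 := hPsub i hb'
      rw [mem_ball] at h1 h2
      linarith [dist_triangle_right (g a) (g b) (TopologicalSpace.denseSeq (Euc n) i)]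
    · gcongr
      rintro _ ⟨a, ⟨ha, ha'⟩, rfl⟩
      exact ⟨ha', hW a ha⟩
  calc volume s ≤ volume (⋃ i, s ∩ g ⁻¹' P i) := measure_mono hs
    _ ≤ ∑' i, volume (s ∩ g ⁻¹' P i) := measure_iUnion_le _
    _ ≤ ∑' i, (K : ℝ≥0∞) ^ n * volume (P i ∩ W) := ENNReal.tsum_le_tsum hpiece
    _ = (K : ℝ≥0∞) ^ n * ∑' i, volume.restrict W (P i) := by
        rw [ENNReal.tsum_mul_left]
        congr 2
        funext i
        rw [Measure.restrict_apply (hPm i)]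
    _ = (K : ℝ≥0∞) ^ n * volume W := by
        rw [← measure_iUnion (disjoint_disjointed _) hPm, hPU, Measure.restrict_apply_univ]

open scoped Pointwise in
theorem volume_cube_scale {n : ℕ} (s : ℝ) (hs : 0 < s) (c : Euc n) :
    volume (cube s c) = ENNReal.ofReal (s ^ n) * volume (cube (1 : ℝ) (0 : Euc n)) := by
  have h : cube s c = (fun y => y + (-c)) ⁻¹' (s • cube (1 : ℝ) (0 : Euc n)) := by
    ext y
    rw [Set.mem_preimage, Set.mem_smul_set_iff_inv_smul_mem₀ hs.ne']
    simp only [cube, Set.mem_ofPred_eq]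
    refine forall_congr' fun i => ?_
    simp only [PiLp.smul_apply, PiLp.add_apply, PiLp.neg_apply, PiLp.zero_apply, smul_eq_mul, sub_zero]
    rw [abs_mul, abs_inv, abs_of_pos hs, inv_mul_lt_iff₀ hs, ← sub_eq_add_neg]
    rw [show s * (1 / 2) = s / 2 by ring]
  rw [h, measure_preimage_add_right, Measure.addHaar_smul, finrank_euclideanSpace_fin,
    abs_of_pos (by positivity)]

theorem geom_ineq {n : ℕ} (x y z : Euc n) (hx : 1 / 2 ≤ ‖x‖) (hz : ‖z‖ ≤ 1 / 4)
    (hy : ‖y - (1 / 2 : ℝ) • z‖ ≤ 9 / 64) : ‖z - y‖ ^ 2 + 1 / 100 ≤ ‖x - y‖ ^ 2 := by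
  have hz2 : ‖(1 / 2 : ℝ) • z‖ ≤ 1 / 8 := by
    rw [norm_smul]; norm_num; linarith
  have hpar := parallelogram_law_with_norm ℝ ((1 / 2 : ℝ) • z) (y - (1 / 2 : ℝ) • z)
  have e1 : (1 / 2 : ℝ) • z + (y - (1 / 2 : ℝ) • z) = y := by abel
  have e2 : (1 / 2 : ℝ) • z - (y - (1 / 2 : ℝ) • z) = z - y := by
    have : z = (1 / 2 : ℝ) • z + (1 / 2 : ℝ) • z := by rw [← add_smul]; norm_num
    nth_rewrite 3 [this]
    abel
  rw [e1, e2] at hpar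
  have hA : ‖y‖ ≤ 17 / 64 := by
    have := norm_add_le ((1 / 2 : ℝ) • z) (y - (1 / 2 : ℝ) • z)
    rw [e1] at this
    linarith
  have hxy : 1 / 2 - ‖y‖ ≤ ‖x - y‖ := by
    have := norm_sub_norm_le x y
    linarith
  have h1 : 0 ≤ ‖y‖ := norm_nonneg _
  have h2 : 0 ≤ ‖z - y‖ := norm_nonneg _
  have h3 := norm_nonneg ((1 / 2 : ℝ) • z)
  have h4 := norm_nonneg (y - (1 / 2 : ℝ) • z)
  have h5 : ‖y‖ * ‖y‖ + ‖z - y‖ * ‖z - y‖ ≤ 145 / 2048 := by nlinarith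
  have h6 : ‖y‖ + ‖z - y‖ ≤ 38 / 100 := by nlinarith [sq_nonneg (‖y‖ - ‖z - y‖)]
  have h7 : (1 / 2 - ‖y‖) ^ 2 ≤ ‖x - y‖ ^ 2 := by
    apply pow_le_pow_left₀ _ hxy; linarith
  nlinarith [mul_nonneg (show 0 ≤ 1 / 2 - ‖y‖ - ‖z - y‖ - 12 / 100 by linarith)
    (show 0 ≤ 1 / 2 - ‖y‖ + ‖z - y‖ - 15 / 64 by linarith)]

theorem exists_contact {n : ℕ} {Ω : Set (Euc n)} {v : Euc n → ℝ} (hn : 2 ≤ n)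
    (hv : ContinuousOn v Ω) (hB : closedBall 0 (2 * Real.sqrt n) ⊆ Ω)
    (p xb z q : Euc n) (hz : ‖z‖ ≤ 1 / 4) (H K : ℝ) (hK : 0 < K) (hKH : 200 * H < K)
    (hG : ∀ x ∈ Ω, v xb + ⟪p, x - xb⟫_ℝ - 1 / 2 * ‖x - xb‖ ^ 2 ≤ v x)
    (hvz : v z ≤ v xb + ⟪p, z - xb⟫_ℝ - 1 / 2 * ‖z - xb‖ ^ 2 + H)
    (hq : q ∈ cube (K * (9 / (32 * Real.sqrt n))) (p + xb + (K / 2) • z)) :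
    ∃ x : Euc n, ‖x‖ < 1 / 2 ∧ 
      ∀ y ∈ Ω, v x + ⟪q, y - x⟫_ℝ - (K + 1) / 2 * (‖y‖ ^ 2 - ‖x‖ ^ 2) ≤ v y := by
  have hn' : (2 : ℝ) ≤ n := by exact_mod_cast hn
  have hsq : 1 ≤ Real.sqrt n := by rw [Real.one_le_sqrt]; linarith
  set y0 : Euc n := K⁻¹ • (q - p - xb) with hy0
  have hqy : q = p + xb + K • y0 := by
    rw [hy0, smul_inv_smul₀ hK.ne']; abel
  have hcoord : ∀ i, |(y0 - (1 / 2 : ℝ) • z) i| ≤ 9 / (64 * Real.sqrt n) := by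
    intro i
    have h := hq i
    rw [hqy] at h
    simp only [PiLp.smul_apply, PiLp.add_apply, PiLp.sub_apply, smul_eq_mul] at h ⊢
    have e : p i + xb i + K * y0 i - (p i + xb i + K / 2 * z i) = K * (y0 i - 1 / 2 * z i) := by ring
    rw [e, abs_mul, abs_of_pos hK, mul_div_assoc] at h
    have := lt_of_mul_lt_mul_left h hK.le
    refine this.le.trans (le_of_eq ?_)
    field_simp
    norm_num
  have hy : ‖y0 - (1 / 2 : ℝ) • z‖ ≤ 9 / 64 := by
    refine le_of_sq_le_sq ?_ (by norm_num)
    rw [EuclideanSpace.real_norm_sq_eq]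
    calc ∑ i, (y0 - (1 / 2 : ℝ) • z) i ^ 2 ≤ ∑ i : Fin n, (9 / (64 * Real.sqrt n)) ^ 2 := by
          refine Finset.sum_le_sum fun i _ => ?_
          rw [← sq_abs]
          exact pow_le_pow_left₀ (abs_nonneg _) (hcoord i) 2
      _ = (9 / 64) ^ 2 := by
          rw [Finset.sum_const, Finset.card_univ, Fintype.card_fin, nsmul_eq_mul, div_pow, mul_pow,
            Real.sq_sqrt (by positivity)]
          field_simp
  set F : Euc n → ℝ := fun x => v x - ⟪q, x⟫_ℝ + (K + 1) / 2 * ‖x‖ ^ 2 with hF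
  obtain ⟨c0, hc0⟩ : ∃ c0 : ℝ, ∀ x, F x = c0 + (v x - (v xb + ⟪p, x - xb⟫_ℝ - 1 / 2 * ‖x - xb‖ ^ 2))
      + K / 2 * ‖x - y0‖ ^ 2 := by
    refine ⟨v xb - ⟪p, xb⟫_ℝ - 1 / 2 * ‖xb‖ ^ 2 - K / 2 * ‖y0‖ ^ 2, fun x => ?_⟩
    simp only [hF]
    rw [hqy, norm_sub_sq_real, norm_sub_sq_real, inner_add_left, inner_add_left, inner_smul_left,
      inner_sub_right, real_inner_comm x xb, real_inner_comm x y0]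
    simp only [conj_trivial]
    ring
  have hsub : closedBall (0 : Euc n) (1 / 2) ⊆ Ω :=
    (closedBall_subset_closedBall (by linarith)).trans hB
  have hout : ∀ x ∈ Ω, 1 / 2 ≤ ‖x‖ → F z < F x := by
    intro x hx hx2
    have h1 := geom_ineq x y0 z hx2 hz hy
    have h2 := hG x hx
    rw [hc0, hc0]
    have h3 : K / 2 * (‖z - y0‖ ^ 2 + 1 / 100) ≤ K / 2 * ‖x - y0‖ ^ 2 := by gcongr
    linarith
  have hFc : ContinuousOn F (closedBall (0 : Euc n) (1 / 2)) := by
    have h1 : Continuous fun x : Euc n => ⟪q, x⟫_ℝ := by fun_prop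
    have h2 : Continuous fun x : Euc n => (K + 1) / 2 * ‖x‖ ^ 2 := by fun_prop
    exact ((hv.mono hsub).sub h1.continuousOn).add h2.continuousOn
  have hzB : z ∈ closedBall (0 : Euc n) (1 / 2) := by
    rw [mem_closedBall, dist_zero_right]; linarith
  obtain ⟨x0, hx0, hmin⟩ := (isCompact_closedBall (0 : Euc n) (1 / 2)).exists_isMinOn ⟨z, hzB⟩ hFc
  have hx0z : F x0 ≤ F z := hmin hzB
  refine ⟨x0, ?_, fun y hyΩ => ?_⟩
  · by_contra hcon
    push Not at hcon
    linarith [hout x0 (hsub hx0) hcon]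
  · have : F x0 ≤ F y := by
      by_cases hyb : 1 / 2 ≤ ‖y‖
      · linarith [hout y hyΩ hyb]
      · push Not at hyb
        exact hmin (by rw [mem_closedBall, dist_zero_right]; exact hyb.le)
    simp only [hF] at this
    rw [inner_sub_right]
    linarith

/-- measure and localization estimate with explicit constants σ and M. -/
theorem stmt_9 (n : ℕ) (hn : 2 ≤ n) (lam Lam : ℝ) (hlam : 0 < lam) (hLam : lam ≤ Lam)
    (Ω : Set (Euc n)) (hΩ : IsOpen Ω) (hB : closedBall 0 (2 * Real.sqrt n) ⊆ Ω)
    (v : Euc n → ℝ) (hv : ContinuousOn v Ω) (hsuper : ViscSupersol lam Lam Ω v)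
    (hne : (Gm 1 v Ω ∩ cube 3 0).Nonempty) :
    ENNReal.ofReal
        (1 - (1 - (lam / (lam + ((n : ℝ) - 1) * Lam)) ^ n * (1 / (4 * Real.sqrt n)) ^ n)) *
        volume (cube (1 : ℝ) (0 : Euc n)) ≤
      volume (Gm (884736 * (n : ℝ) ^ 3 *
        (36 * (n : ℝ)) ^ (max (1 : ℝ) (((n : ℝ) - 1) * Lam / lam - 1))) v Ω ∩ cube 1 0) := by
  have hn' : (2 : ℝ) ≤ n := by exact_mod_cast hn
  have hsq0 : 0 < Real.sqrt n := Real.sqrt_pos.mpr (by linarith)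
  have hsq : 1 ≤ Real.sqrt n := by rw [Real.one_le_sqrt]; linarith
  set γ : ℝ := max (1 : ℝ) (((n : ℝ) - 1) * Lam / lam - 1) with hγdef
  set M : ℝ := 884736 * (n : ℝ) ^ 3 * (36 * (n : ℝ)) ^ γ with hMdef
  set k : ℝ := 1 + ((n : ℝ) - 1) * Lam / lam with hkdef
  have hγ : 1 ≤ γ := le_max_left _ _
  have hkγ : k ≤ γ + 2 := by
    have := le_max_right (1 : ℝ) (((n : ℝ) - 1) * Lam / lam - 1)
    rw [hkdef]; linarith
  have hk : lam * k = lam + ((n : ℝ) - 1) * Lam := by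
    rw [hkdef]; field_simp
  have hk0 : 0 < k := by
    have : 0 ≤ ((n : ℝ) - 1) * Lam / lam :=
      div_nonneg (mul_nonneg (by linarith) (by linarith)) hlam.le
    rw [hkdef]; linarith
  have hP : 1 ≤ (36 * (n : ℝ)) ^ γ := Real.one_le_rpow (by linarith) (by linarith)
  have hM1 : 884736 * (n : ℝ) * (36 * (n : ℝ)) ^ γ ≤ M := by
    have : (n : ℝ) ≤ (n : ℝ) ^ 3 := by nlinarith [mul_pos (show (0:ℝ) < n by linarith) (show (0:ℝ) < n by linarith)]
    rw [hMdef]; gcongr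
  have hnP : 1 ≤ (n : ℝ) * (36 * (n : ℝ)) ^ γ := by nlinarith
  have hM100 : 884736 ≤ M := by nlinarith
  set K : ℝ := M - 1 with hKdef
  have hK0 : 0 < K := by linarith
  have hMK : M = K + 1 := by rw [hKdef]; ring
  obtain ⟨xb, ⟨hxbΩ, p, hp⟩, hxbc⟩ := hne
  have hxb : ‖xb‖ ^ 2 < 9 * n / 4 := by
    rw [EuclideanSpace.real_norm_sq_eq]
    have hne : (Finset.univ : Finset (Fin n)).Nonempty := ⟨⟨0, by omega⟩, Finset.mem_univ _⟩
    calc ∑ i, xb i ^ 2 < ∑ i : Fin n, (9 / 4 : ℝ) := by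
          refine Finset.sum_lt_sum_of_nonempty hne fun i _ => ?_
          have h := hxbc i
          simp only [PiLp.zero_apply, sub_zero] at h
          rw [← sq_abs]
          nlinarith [abs_nonneg (xb i)]
      _ = 9 * n / 4 := by simp; ring
  have hG : ∀ x ∈ Ω, v xb + ⟪p, x - xb⟫_ℝ - 1 / 2 * ‖x - xb‖ ^ 2 ≤ v x := fun x hx => hp x hx
  obtain ⟨z, hz, hvz⟩ := exists_low_point hlam hLam hn hv hB hsuper k hk γ hγ hkγ p xb hxb hG
  set Y : Set (Euc n) := cube (K * (9 / (32 * Real.sqrt n))) (p + xb + (K / 2) • z) with hY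
  have hcontact : ∀ q ∈ Y, ∃ x : Euc n, ‖x‖ < 1 / 2 ∧
      ∀ y ∈ Ω, v x + ⟪q, y - x⟫_ℝ - M / 2 * (‖y‖ ^ 2 - ‖x‖ ^ 2) ≤ v y := by
    intro q hq
    rw [hMK]
    exact exists_contact hn hv hB p xb z q hz _ K hK0 (by linarith) hG hvz hq
  choose! g hg1 hg2 using hcontact
  have hball : ∀ q ∈ Y, closedBall (g q) 1 ⊆ Ω := by
    intro q hq
    refine Set.Subset.trans ?_ hB
    apply closedBall_subset_closedBall'
    rw [dist_zero_right]
    linarith [hg1 q hq]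
  have hΩg : ∀ q ∈ Y, g q ∈ Ω := fun q hq => hball q hq (mem_closedBall_self zero_le_one)
  have hL0 : 0 < 17 / 16 * k * M := by positivity
  set L : NNReal := ⟨17 / 16 * k * M, hL0.le⟩ with hL
  have hLc : (L : ℝ) = 17 / 16 * k * M := rfl
  obtain ⟨ρ, hρ, hρ0⟩ : ∃ ρ : ℝ, 0 < ρ ∧ 100 * k * ρ ^ 2 < 1 := by
    refine ⟨1 / (11 * (k + 1)), by positivity, ?_⟩
    rw [div_pow, one_pow, mul_one_div, div_lt_one (by positivity)]
    nlinarith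
  have hvol := volume_le_of_local_antilip Y g L ρ hρ (Gm M v Ω ∩ cube 1 0) ?_ ?_
  rotate_left
  · intro q hq
    refine ⟨⟨hΩg q hq, q - M • g q, fun x hx => ?_⟩, fun i => ?_⟩
    · have h := hg2 q hq x hx
      have hx' : x = g q + (x - g q) := by abel
      have e : ‖x‖ ^ 2 - ‖g q‖ ^ 2 = 2 * ⟪g q, x - g q⟫_ℝ + ‖x - g q‖ ^ 2 := by
        conv_lhs => rw [hx', norm_add_sq_real]
        ring
      rw [e] at h
      rw [inner_sub_left, inner_smul_left]
      simp only [conj_trivial]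
      linarith
    · have h1 := PiLp.norm_apply_le (g q) i
      rw [Real.norm_eq_abs] at h1
      simp only [PiLp.zero_apply, sub_zero]
      linarith [hg1 q hq]
  · intro a ha b hb hab
    rw [dist_eq_norm, dist_eq_norm, hLc]
    rw [dist_eq_norm] at hab
    have key : ∀ ρ' : ℝ, 0 < ρ' → ρ' ≤ ρ → ‖g a - g b‖ ≤ ρ' → ‖a - b‖ ≤ 17 / 16 * k * M * ρ' := by
      intro ρ' h0 h1 h2
      refine lip_pair hlam hLam hn hv hsuper k hk0 hk M (by linarith) (g a) (g b) a b
        (hball a ha) (hball b hb) ρ' h0 ?_ h2 (hg2 a ha) (hg2 b hb)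
      refine lt_of_le_of_lt ?_ hρ0
      gcongr
    refine le_of_forall_pos_lt_add fun ε hε => ?_
    set δ := min (ρ - ‖g a - g b‖) (ε / (2 * (17 / 16 * k * M))) with hδ
    have hδ0 : 0 < δ := lt_min (by linarith) (by positivity)
    have hδ1 : δ ≤ ρ - ‖g a - g b‖ := min_le_left _ _
    have hδ2 : δ ≤ ε / (2 * (17 / 16 * k * M)) := min_le_right _ _
    have := key (‖g a - g b‖ + δ) (by positivity) (by linarith) (by linarith)
    rw [le_div_iff₀ (by positivity)] at hδ2
    nlinarith
  rw [hY, volume_cube_scale _ (by positivity)] at hvol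
  have hLn0 : (L : ℝ≥0∞) ^ n ≠ 0 := by
    apply pow_ne_zero
    rw [ENNReal.coe_ne_zero]
    exact fun h => hL0.ne' (by rw [← hLc, h]; rfl)
  have hLnT : (L : ℝ≥0∞) ^ n ≠ ∞ := ENNReal.pow_ne_top ENNReal.coe_ne_top
  rw [← ENNReal.mul_le_mul_iff_right hLn0 hLnT]
  refine le_trans ?_ hvol
  rw [← mul_assoc]
  gcongr
  have hLo : (L : ℝ≥0∞) = ENNReal.ofReal (17 / 16 * k * M) := by
    rw [← hLc, ENNReal.ofReal_coe_nnreal]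
  rw [hLo, ← ENNReal.ofReal_pow hL0.le, ← ENNReal.ofReal_mul (by positivity)]
  apply ENNReal.ofReal_le_ofReal
  rw [sub_sub_cancel, ← mul_pow, ← mul_pow, ← hk]
  have e1 : 17 / 16 * k * M * (lam / (lam * k) * (1 / (4 * Real.sqrt n))) = 17 / 64 * M / Real.sqrt n := by
    field_simp
    norm_num
  have e2 : K * (9 / (32 * Real.sqrt n)) = 18 / 64 * K / Real.sqrt n := by
    field_simp
    norm_num
  rw [e1, e2]
  gcongr ?_ ^ n
  gcongr ?_ / _
  linarith
end
end

section
/- Let n ≥ 2 be an integer and 0 < λ ≤ Λ real constants. Set σ := 1 − (λ/(λ+(n−1)Λ))^n · (1/(4√n))^n and M := 884736·n³·(36n)^{max{1, (n−1)Λ/λ − 1}}. Let Ω ⊆ ℝⁿ be an open set containing the closed ball of radius 2√n centered at 0, and let v : Ω → ℝ be a continuous viscosity supersolution of M⁻_{λ,Λ}(D²v) ≤ 0 in Ω with |v| ≤ 1/4 on Ω. Then for every integer k ≥ 0, |A⁻_{M^k}(v,Ω) ∩ Q₁| ≤ σ^k. -/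
open MeasureTheory Metric
open scoped InnerProductSpace ENNReal

noncomputable section

theorem vol_lip {n : ℕ} {L : NNReal} {f : Euc n → Euc n} {s : Set (Euc n)}
    (h : LipschitzOnWith L f s) : volume (f '' s) ≤ (L : ℝ≥0∞) ^ n * volume s := by
  have e := Measure.isAddLeftInvariant_eq_smul (volume : Measure (Euc n))
    (μH[Module.finrank ℝ (Euc n)] : Measure (Euc n))
  rw [e]
  have h2 := h.hausdorffMeasure_image_le (d := (Module.finrank ℝ (Euc n) : ℝ)) (by positivity)
  simp only [Measure.smul_apply, ENNReal.smul_def, smul_eq_mul]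
  rw [ENNReal.rpow_natCast] at h2
  simp only [finrank_euclideanSpace, Fintype.card_fin] at h2 ⊢
  calc _ ≤ _ := mul_le_mul_right h2 _
    _ = _ := by ring

theorem psd_trace {n : ℕ} {B : Matrix (Fin n) (Fin n) ℝ} (hB : B.PosSemidef) (a : Fin n → ℝ) :
    a ⬝ᵥ (B.mulVec a) ≤ B.trace * (a ⬝ᵥ a) := by
  obtain ⟨C, rfl⟩ : ∃ C : Matrix (Fin n) (Fin n) ℝ, B = C.transpose * C := by
    open scoped MatrixOrder in
    obtain ⟨C, hC⟩ := CStarAlgebra.nonneg_iff_eq_star_mul_self.mp hB.nonneg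
    exact ⟨C, by rw [hC]; rfl⟩
  rw [← Matrix.mulVec_mulVec, Matrix.dotProduct_mulVec, Matrix.vecMul_transpose]
  have : (C.transpose * C).trace = ∑ i, ∑ j, C i j ^ 2 := by
    simp only [Matrix.trace, Matrix.diag, Matrix.mul_apply, Matrix.transpose_apply]
    rw [Finset.sum_comm]
    simp [sq]
  rw [this, dotProduct, Finset.sum_mul]
  refine Finset.sum_le_sum fun i _ => ?_
  have := Finset.sum_mul_sq_le_sq_mul_sq Finset.univ (C i) a
  simpa [Matrix.mulVec, dotProduct, sq] using this

theorem pucci_lower {n : ℕ} {lam Lam : ℝ} (hlam : 0 < lam) (hLam : lam ≤ Lam)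
    (a : Fin n → ℝ) (P q : ℝ) (ha : 0 < a ⬝ᵥ a) (hq : 0 ≤ q) (hPq : q ≤ P * (a ⬝ᵥ a)) :
    (P * (a ⬝ᵥ a) - q) * lam - q * ((n : ℝ) - 1) * Lam ≤
      pucciInf lam Lam (P • Matrix.vecMulVec a a - q • (1 : Matrix (Fin n) (Fin n) ℝ)) := by
  apply le_csInf
  · refine ⟨_, lam • 1, ?_, ?_, ?_, rfl⟩
    · simp [Matrix.IsSymm]
    · simp [matLE, Matrix.PosSemidef.zero]
    · unfold matLE
      rw [← sub_smul]
      exact Matrix.PosSemidef.one.smul (by linarith)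
  · rintro t ⟨A, hA, h1, h2, rfl⟩
    have e1 : (A * (P • Matrix.vecMulVec a a - q • (1 : Matrix (Fin n) (Fin n) ℝ))).trace
        = P * (a ⬝ᵥ A.mulVec a) - q * A.trace := by
      simp [mul_sub, Matrix.trace_sub, Matrix.mul_vecMulVec, Matrix.trace_vecMulVec, dotProduct_comm]
    rw [e1]
    have t1 := psd_trace h2 a
    have t2 := h1.dotProduct_mulVec_nonneg a
    simp only [Matrix.sub_mulVec, Matrix.smul_mulVec, Matrix.one_mulVec, dotProduct_sub, dotProduct_smul,
      Matrix.trace_sub, Matrix.trace_smul, Matrix.trace_one, Fintype.card_fin, smul_eq_mul, star_trivial] at t1 t2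
    set s := a ⬝ᵥ a
    set w := a ⬝ᵥ A.mulVec a
    -- t1 : Lam*s - w ≤ (Lam*n - tr A) * s ; t2 : 0 ≤ w - lam*s
    have t3 : A.trace ≤ ((n:ℝ) - 1) * Lam + w / s := by
      rw [← sub_le_iff_le_add', le_div_iff₀ ha]; nlinarith
    have t4 : lam ≤ w / s := by rw [le_div_iff₀ ha]; linarith
    have t5 : w = (w / s) * s := by field_simp
    have t6 := mul_le_mul_of_nonneg_left t3 hq
    have t7 := mul_le_mul_of_nonneg_left t4 (sub_nonneg.2 hPq)
    rw [t5]
    nlinarith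

theorem hess_eq {n : ℕ} {φ : Euc n → ℝ} {G : Euc n → Euc n} {x₀ : Euc n} {H : Euc n →L[ℝ] Euc n}
    (h1 : ∀ᶠ x in nhds x₀, HasFDerivAt φ (innerSL ℝ (G x)) x) (h2 : HasFDerivAt G H x₀)
    (i j : Fin n) : hessianMatrix φ x₀ i j = ⟪H (EuclideanSpace.single i 1), EuclideanSpace.single j 1⟫_ℝ := by
  unfold hessianMatrix
  rw [Matrix.of_apply, iteratedFDeriv_two_apply]
  have h3 : fderiv ℝ φ =ᶠ[nhds x₀] fun x => innerSL ℝ (G x) := h1.mono fun x hx => hx.fderiv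
  rw [h3.fderiv_eq]
  have h4 : HasFDerivAt (fun x => innerSL ℝ (G x)) ((innerSL ℝ : Euc n →L[ℝ] Euc n →L[ℝ] ℝ).comp H) x₀ :=
    (innerSL ℝ : Euc n →L[ℝ] Euc n →L[ℝ] ℝ).hasFDerivAt.comp x₀ h2
  rw [h4.fderiv]
  simp

/-- contradiction with the supersolution property -/
theorem visc_contra {n : ℕ} {lam Lam : ℝ} (hlam : 0 < lam) (hLam : lam ≤ Lam)
    {Ω : Set (Euc n)} {v : Euc n → ℝ} (hsuper : ViscSupersol lam Lam Ω v)
    {φ : Euc n → ℝ} {G : Euc n → Euc n} {x₀ : Euc n} (hx₀ : x₀ ∈ Ω)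
    {U : Set (Euc n)} (hU : IsOpen U) (hxU : x₀ ∈ U) (hc : ContDiffOn ℝ 2 φ U)
    (a : Euc n) (P q : ℝ)
    (h1 : ∀ x ∈ U, HasFDerivAt φ (innerSL ℝ (G x)) x)
    (h2 : HasFDerivAt G (P • (innerSL ℝ a).smulRight a - q • ContinuousLinearMap.id ℝ (Euc n)) x₀)
    (ha : a ≠ 0) (hq : 0 ≤ q) (hPq : q ≤ P * ‖a‖ ^ 2)
    (hpos : 0 < (P * ‖a‖ ^ 2 - q) * lam - q * ((n : ℝ) - 1) * Lam)
    (hmin : IsLocalMinOn (fun x => v x - φ x) Ω x₀) : False := by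
  have h := hsuper x₀ hx₀ φ ⟨U, hU, hxU, hc⟩ hmin
  have e : hessianMatrix φ x₀ = P • Matrix.vecMulVec a.ofLp a.ofLp - q • (1 : Matrix (Fin n) (Fin n) ℝ) := by
    ext i j
    rw [hess_eq (Filter.eventually_of_mem (hU.mem_nhds hxU) h1) h2]
    simp [Matrix.vecMulVec_apply, inner_sub_left, inner_smul_left, Matrix.one_apply, Pi.single_apply,
      EuclideanSpace.inner_single_right, eq_comm]
  have ea : a.ofLp ⬝ᵥ a.ofLp = ‖a‖ ^ 2 := by
    rw [EuclideanSpace.norm_sq_eq]; simp [dotProduct, sq]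
  rw [e] at h
  have := pucci_lower hlam hLam a.ofLp P q (by rw [ea]; positivity) hq (by rwa [ea])
  rw [ea] at this
  linarith

theorem inner_hasFDeriv {n : ℕ} (w xs x : Euc n) :
    HasFDerivAt (fun x : Euc n => ⟪w, x - xs⟫_ℝ) (innerSL ℝ w) x := by
  have := ((innerSL ℝ w).hasFDerivAt (x := x)).sub_const ⟪w, xs⟫_ℝ
  refine this.congr_of_eventuallyEq (Filter.Eventually.of_forall fun x => ?_)
  simp [inner_sub_right]

theorem quad_cd {n : ℕ} (f0 K P : ℝ) (xs Y d p : Euc n) :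
    ContDiff ℝ 2 (fun x : Euc n => f0 + K * ⟪Y, x - xs⟫_ℝ + P / 2 * ⟪d, x - xs⟫_ℝ ^ 2
    + ⟪p, x - 0⟫_ℝ - K / 2 * ‖x‖ ^ 2) := by
  have h0 : ContDiff ℝ 2 fun x : Euc n => ‖x‖ ^ 2 := contDiff_norm_sq ℝ
  have h1 : ∀ w z : Euc n, ContDiff ℝ 2 fun x : Euc n => ⟪w, x - z⟫_ℝ := fun w z =>
    contDiff_const.inner ℝ (contDiff_id.sub contDiff_const)
  exact (((contDiff_const.add (contDiff_const.mul (h1 _ _))).add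
    (contDiff_const.mul ((h1 _ _).pow 2))).add (h1 _ _)).sub (contDiff_const.mul h0)

theorem quad_d1 {n : ℕ} (f0 K P : ℝ) (xs Y d p x : Euc n) :
    HasFDerivAt (fun x : Euc n => f0 + K * ⟪Y, x - xs⟫_ℝ + P / 2 * ⟪d, x - xs⟫_ℝ ^ 2
    + ⟪p, x - 0⟫_ℝ - K / 2 * ‖x‖ ^ 2)
     (innerSL ℝ (K • Y + (P * ⟪d, x - xs⟫_ℝ) • d + p - K • x)) x := by
  have i3 := (hasStrictFDerivAt_norm_sq x).hasFDerivAt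
  have := (((((inner_hasFDeriv Y xs x).const_mul K).const_add f0).add
      (((inner_hasFDeriv d xs x).pow 2).const_mul (P / 2))).add (inner_hasFDeriv p 0 x)).sub
        (i3.const_mul (K/2))
  refine this.congr_fderiv ?_
  ext w
  simp [inner_add_left, inner_sub_left, inner_smul_left]
  ring

theorem quad_d2 {n : ℕ} (K P : ℝ) (xs Y d p x : Euc n) :
    HasFDerivAt (fun x : Euc n => (K • Y + (P * ⟪d, x - xs⟫_ℝ) • d + p - K • x))
     (P • (innerSL ℝ d).smulRight d - K • ContinuousLinearMap.id ℝ (Euc n)) x := by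
  have := (((((inner_hasFDeriv d xs x).const_mul P).smul_const d).const_add (K • Y)).add_const p).sub
      ((hasFDerivAt_id x).const_smul K)
  refine this.congr_fderiv ?_
  ext w
  simp [mul_assoc]


theorem oneD (h : ℝ → ℝ) (hc : ContinuousOn h (Set.Icc 0 1)) (s0 s1 c : ℝ) (hcpos : 0 < c)
    (h0 : ∀ t ∈ Set.Icc (0:ℝ) 1, h 0 + s0 * t ≤ h t)
    (h1 : ∀ t ∈ Set.Icc (0:ℝ) 1, h 1 + s1 * (t - 1) ≤ h t) (hs : s1 - s0 < c) :
    ∃ t₀ ∈ Set.Ioo (0:ℝ) 1, ∃ b : ℝ, ∀ t ∈ Set.Icc (0:ℝ) 1,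
      h t ≤ h t₀ + b * (t - t₀) + c / 2 * (t - t₀) ^ 2 := by
  set m := h 1 - h 0 - c / 2 with hm
  set G : ℝ → ℝ := fun t => h t - h 0 - c / 2 * t ^ 2 - m * t with hG
  have hGc : ContinuousOn G (Set.Icc 0 1) := by
    apply ContinuousOn.sub (ContinuousOn.sub (hc.sub continuousOn_const) _) _ <;> fun_prop
  have hpos : ∃ t ∈ Set.Icc (0:ℝ) 1, 0 < G t := by
    rcases lt_or_ge m s0 with hlt | hge
    · set t := min 1 ((s0 - m) / c) with ht
      have t0 : 0 < t := lt_min one_pos (div_pos (by linarith) hcpos)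
      have t1 : t ≤ 1 := min_le_left _ _
      have t2 : t * c ≤ s0 - m := (le_div_iff₀ hcpos).1 (min_le_right _ _)
      refine ⟨t, ⟨t0.le, t1⟩, ?_⟩
      have := h0 t ⟨t0.le, t1⟩
      have : t * (s0 - m - c * t / 2) ≤ G t := by simp only [hG]; nlinarith
      have : 0 < t * (s0 - m - c * t / 2) := mul_pos t0 (by linarith)
      linarith
    · set τ := min 1 ((m - s1 + c) / c) with ht
      have t0 : 0 < τ := lt_min one_pos (div_pos (by linarith) hcpos)
      have t1 : τ ≤ 1 := min_le_left _ _
      have t2 : τ * c ≤ m - s1 + c := (le_div_iff₀ hcpos).1 (min_le_right _ _)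
      have hmem : (1 - τ) ∈ Set.Icc (0:ℝ) 1 := ⟨by linarith, by linarith⟩
      refine ⟨1 - τ, hmem, ?_⟩
      have := h1 _ hmem
      have : τ * (m - s1 + c - c * τ / 2) ≤ G (1 - τ) := by simp only [hG]; nlinarith
      have : 0 < τ * (m - s1 + c - c * τ / 2) := mul_pos t0 (by linarith)
      linarith
  obtain ⟨t, ht, hGt⟩ := hpos
  obtain ⟨t₀, ht₀, hmax⟩ := isCompact_Icc.exists_isMaxOn ⟨t, ht⟩ hGc
  have hG0 : 0 < G t₀ := hGt.trans_le (hmax ht)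
  have e0 : G 0 = 0 := by simp [hG]
  have e1 : G 1 = 0 := by simp only [hG, hm]; ring
  refine ⟨t₀, ⟨lt_of_le_of_ne ht₀.1 ?_, lt_of_le_of_ne ht₀.2 ?_⟩, m + c * t₀, ?_⟩
  · rintro rfl; linarith
  · rintro rfl; linarith
  · intro s hs
    have : G s ≤ G t₀ := hmax hs
    simp only [hG] at this
    nlinarith

theorem slope_eq (b B c t₀ : ℝ) (ht : t₀ ∈ Set.Ioo (0:ℝ) 1)
    (h : ∀ t ∈ Set.Icc (0:ℝ) 1, B * (t - t₀) ≤ b * (t - t₀) + c / 2 * (t - t₀) ^ 2) : b = B := by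
  have hd : HasDerivAt (fun t => b * (t - t₀) + c / 2 * (t - t₀) ^ 2 - B * (t - t₀)) (b - B) t₀ := by
    have h1 : HasDerivAt (fun t : ℝ => t - t₀) 1 t₀ := (hasDerivAt_id t₀).sub_const t₀
    have := ((h1.const_mul b).add ((h1.pow 2).const_mul (c/2))).sub (h1.const_mul B)
    refine this.congr_deriv ?_
    simp
  have hl : IsLocalMin (fun t => b * (t - t₀) + c / 2 * (t - t₀) ^ 2 - B * (t - t₀)) t₀ := by
    filter_upwards [Icc_mem_nhds ht.1 ht.2] with t ht'
    have := h t ht'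
    have e : b * (t₀ - t₀) + c / 2 * (t₀ - t₀) ^ 2 - B * (t₀ - t₀) = 0 := by ring
    rw [e]
    linarith
  have := hl.hasDerivAt_eq_zero hd
  linarith

theorem contact_lip {n : ℕ} (hn : 2 ≤ n) {lam Lam : ℝ} (hlam : 0 < lam) (hLam : lam ≤ Lam)
    {Ω : Set (Euc n)} {v : Euc n → ℝ} (hsuper : ViscSupersol lam Lam Ω v)
    {K R : ℝ} (hK : 0 < K) (p : Euc n) {V : Set (Euc n)} (hV : Convex ℝ V)
    (hcon : ∀ y ∈ V, ∃ x ∈ Ω, ‖x‖ ≤ R ∧ ∀ x' ∈ Ω,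
      v x - ⟪p, x⟫_ℝ + K / 2 * ‖x - y‖ ^ 2 ≤ v x' - ⟪p, x'⟫_ℝ + K / 2 * ‖x' - y‖ ^ 2)
    {x1 x2 y1 y2 : Euc n} (hx1 : x1 ∈ Ω) (hx2 : x2 ∈ Ω) (hy1 : y1 ∈ V) (hy2 : y2 ∈ V)
    (hxy1 : ∀ x' ∈ Ω,
      v x1 - ⟪p, x1⟫_ℝ + K / 2 * ‖x1 - y1‖ ^ 2 ≤ v x' - ⟪p, x'⟫_ℝ + K / 2 * ‖x' - y1‖ ^ 2)
    (hxy2 : ∀ x' ∈ Ω,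
      v x2 - ⟪p, x2⟫_ℝ + K / 2 * ‖x2 - y2‖ ^ 2 ≤ v x' - ⟪p, x'⟫_ℝ + K / 2 * ‖x' - y2‖ ^ 2) :
    ‖y1 - y2‖ ≤ (1 + ((n:ℝ) - 1) * Lam / lam) * ‖x1 - x2‖ := by
  by_contra! hcontra
  set L := 1 + ((n:ℝ) - 1) * Lam / lam with hL
  have hn' : (2:ℝ) ≤ n := by exact_mod_cast hn
  have hLp : 0 < L := by
    have : 0 ≤ ((n:ℝ) - 1) * Lam / lam := div_nonneg (mul_nonneg (by linarith) (by linarith)) hlam.le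
    linarith
  set f : Euc n → ℝ := fun x => v x - ⟪p, x⟫_ℝ + K / 2 * ‖x‖ ^ 2 with hf
  have key : ∀ x y x', v x - ⟪p, x⟫_ℝ + K / 2 * ‖x - y‖ ^ 2 ≤ v x' - ⟪p, x'⟫_ℝ + K / 2 * ‖x' - y‖ ^ 2
      ↔ K * ⟪x', y⟫_ℝ - f x' ≤ K * ⟪x, y⟫_ℝ - f x := by
    intro x y x'
    rw [norm_sub_sq_real, norm_sub_sq_real]
    simp only [hf]
    constructor <;> intro h <;> linarith
  simp only [key] at hcon hxy1 hxy2
  set d := y2 - y1 with hd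
  have hdn : ‖y1 - y2‖ = ‖d‖ := by rw [hd, norm_sub_rev]
  rw [hdn] at hcontra
  have hdpos : 0 < ‖d‖ := lt_of_le_of_lt (by positivity) hcontra
  have hseg : ∀ t ∈ Set.Icc (0:ℝ) 1, y1 + t • d ∈ V := fun t ht =>
    hV.add_smul_sub_mem hy1 hy2 ht
  have hX : ∀ t : ℝ, ∃ x, t ∈ Set.Icc (0:ℝ) 1 → x ∈ Ω ∧ ‖x‖ ≤ R ∧ ∀ x' ∈ Ω,
      K * ⟪x', y1 + t • d⟫_ℝ - f x' ≤ K * ⟪x, y1 + t • d⟫_ℝ - f x := by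
    intro t
    by_cases ht : t ∈ Set.Icc (0:ℝ) 1
    · obtain ⟨x, h1, h2, h3⟩ := hcon _ (hseg t ht)
      exact ⟨x, fun _ => ⟨h1, h2, h3⟩⟩
    · exact ⟨0, fun h => absurd h ht⟩
  choose X hX using hX
  set h : ℝ → ℝ := fun t => K * ⟪X t, y1 + t • d⟫_ℝ - f (X t) with hh
  have hge : ∀ t ∈ Set.Icc (0:ℝ) 1, ∀ x ∈ Ω, K * ⟪x, y1⟫_ℝ + t * (K * ⟪x, d⟫_ℝ) - f x ≤ h t := by
    intro t ht x hx
    have := (hX t ht).2.2 x hx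
    simp only [inner_add_right, inner_smul_right] at this
    simp only [hh, inner_add_right, inner_smul_right]
    linarith
  have heq : ∀ t, h t = K * ⟪X t, y1⟫_ℝ + t * (K * ⟪X t, d⟫_ℝ) - f (X t) := by
    intro t
    simp only [hh, inner_add_right, inner_smul_right]; ring
  have hsub : ∀ s ∈ Set.Icc (0:ℝ) 1, ∀ t ∈ Set.Icc (0:ℝ) 1, h s + K * ⟪X s, d⟫_ℝ * (t - s) ≤ h t := by
    intro s hs t ht
    have := hge t ht (X s) (hX s hs).1
    rw [heq s]; linarith
  have hR : 0 ≤ R := (norm_nonneg _).trans (hX 0 (by simp)).2.1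
  have hlipc : ContinuousOn h (Set.Icc 0 1) := by
    have : LipschitzOnWith (Real.toNNReal (K * (R * ‖d‖))) h (Set.Icc 0 1) := by
      apply LipschitzOnWith.of_dist_le_mul
      intro s hs t ht
      rw [Real.coe_toNNReal _ (by positivity), Real.dist_eq, Real.dist_eq]
      have hb : ∀ s ∈ Set.Icc (0:ℝ) 1, |K * ⟪X s, d⟫_ℝ| ≤ K * (R * ‖d‖) := by
        intro s hs
        rw [abs_mul, abs_of_pos hK]
        gcongr
        exact (abs_real_inner_le_norm _ _).trans (by gcongr; exact (hX s hs).2.1)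
      have a1 := hsub s hs t ht
      have a2 := hsub t ht s hs
      have b1 : |K * ⟪X s, d⟫_ℝ * (t - s)| ≤ K * (R * ‖d‖) * |s - t| := by
        rw [abs_mul, abs_sub_comm t s]; gcongr; exact hb s hs
      have b2 : |K * ⟪X t, d⟫_ℝ * (s - t)| ≤ K * (R * ‖d‖) * |s - t| := by
        rw [abs_mul]; gcongr; exact hb t ht
      rw [abs_le] at b1 b2 ⊢
      constructor <;> linarith
    exact this.continuousOn
  -- choose c
  set c := K * ‖d‖ * (‖x1 - x2‖ + ‖d‖ / L) / 2 with hcdef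
  have hlt : ‖x1 - x2‖ < ‖d‖ / L := by rw [lt_div_iff₀ hLp]; linarith
  have hKd : 0 < K * ‖d‖ := by positivity
  have hcpos : 0 < c := by positivity
  have hc1 : K * ⟪x2, d⟫_ℝ - K * ⟪x1, d⟫_ℝ < c := by
    have : ⟪x2 - x1, d⟫_ℝ ≤ ‖x1 - x2‖ * ‖d‖ := by
      rw [norm_sub_rev]; exact real_inner_le_norm _ _
    rw [inner_sub_left] at this
    have h3 : K * (⟪x2, d⟫_ℝ - ⟪x1, d⟫_ℝ) ≤ K * (‖x1 - x2‖ * ‖d‖) := by gcongr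
    have h4 := mul_lt_mul_of_pos_left hlt hKd
    rw [hcdef]; nlinarith
  have hc2 : c * L < K * ‖d‖ ^ 2 := by
    have h4 := mul_lt_mul_of_pos_left hlt (mul_pos hKd hLp)
    have h5 : ‖d‖ / L * L = ‖d‖ := by field_simp
    rw [hcdef]; nlinarith
  have z0 : (0:ℝ) ∈ Set.Icc (0:ℝ) 1 := by simp
  have z1 : (1:ℝ) ∈ Set.Icc (0:ℝ) 1 := by simp
  have hh0 : h 0 ≤ K * ⟪x1, y1⟫_ℝ - f x1 := by
    have := hxy1 (X 0) (hX 0 z0).1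
    rw [heq]; linarith
  have hh1 : h 1 ≤ K * ⟪x2, y1⟫_ℝ + K * ⟪x2, d⟫_ℝ - f x2 := by
    have := hxy2 (X 1) (hX 1 z1).1
    have e : y2 = y1 + d := by rw [hd]; abel
    rw [e, inner_add_right, inner_add_right] at this
    rw [heq]; linarith
  obtain ⟨t₀, ht₀, b, hb⟩ := oneD h hlipc (K * ⟪x1, d⟫_ℝ) (K * ⟪x2, d⟫_ℝ) c hcpos
    (fun t ht => by have := hge t ht x1 hx1; linarith)
    (fun t ht => by have := hge t ht x2 hx2; linarith) hc1
  have ht₀' : t₀ ∈ Set.Icc (0:ℝ) 1 := ⟨ht₀.1.le, ht₀.2.le⟩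
  set xs := X t₀ with hxs
  have hxsΩ : xs ∈ Ω := (hX t₀ ht₀').1
  have hbB : b = K * ⟪xs, d⟫_ℝ := by
    apply slope_eq b _ c t₀ ht₀
    intro t ht
    have := hb t ht
    have := hsub t₀ ht₀' t ht
    linarith
  -- test function
  have hf_lower : ∀ᶠ x in nhdsWithin xs Ω,
      f xs + K * ⟪x - xs, y1 + t₀ • d⟫_ℝ + K ^ 2 / (2 * c) * ⟪x - xs, d⟫_ℝ ^ 2 ≤ f x := by
    have hcont : Continuous fun x : Euc n => t₀ + K * ⟪x - xs, d⟫_ℝ / c := by fun_prop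
    have hev : ∀ᶠ x in nhds xs, t₀ + K * ⟪x - xs, d⟫_ℝ / c ∈ Set.Icc (0:ℝ) 1 := by
      apply hcont.continuousAt.eventually_mem
      simpa using Icc_mem_nhds ht₀.1 ht₀.2
    filter_upwards [mem_nhdsWithin_of_mem_nhds hev, self_mem_nhdsWithin] with x hx hxΩ
    have a1 := hge _ hx x hxΩ
    have a2 := hb _ hx
    rw [heq t₀, ← hxs, hbB] at a2
    simp only [inner_sub_left, inner_add_right, inner_smul_right] at a1 a2 ⊢
    set δ := ⟪x, d⟫_ℝ - ⟪xs, d⟫_ℝ with hδ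
    have e1 : ⟪x, d⟫_ℝ = ⟪xs, d⟫_ℝ + δ := by rw [hδ]; ring
    rw [e1] at a1
    have e2 : c / 2 * (t₀ + K * δ / c - t₀) ^ 2 = K ^ 2 / (2 * c) * δ ^ 2 := by
      field_simp; ring
    have e3 : (t₀ + K * δ / c) * (K * (⟪xs, d⟫_ℝ + δ)) =
       t₀ * K * ⟪xs, d⟫_ℝ + t₀ * K * δ + K * ⟪xs, d⟫_ℝ * (K * δ / c) + 2 * (K ^ 2 / (2 * c) * δ ^ 2) := by
      field_simp; ring
    rw [e2] at a2
    rw [e3] at a1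
    linarith
  have hL1 : 1 ≤ L := by
    have : 0 ≤ ((n:ℝ) - 1) * Lam / lam := div_nonneg (mul_nonneg (by linarith) (by linarith)) hlam.le
    linarith
  have hcK : c * K ≤ K ^ 2 * ‖d‖ ^ 2 := by
    have h1 : c ≤ c * L := le_mul_of_one_le_right hcpos.le hL1
    have h2 : c * K ≤ K * ‖d‖ ^ 2 * K := by gcongr; linarith
    linarith
  have hpos : 0 < (K ^ 2 / c * ‖d‖ ^ 2 - K) * lam - K * ((n:ℝ) - 1) * Lam := by
    have e1 : L * lam = lam + (n - 1) * Lam := by rw [hL]; field_simp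
    have e2 : K * L < K ^ 2 / c * ‖d‖ ^ 2 := by
      rw [div_mul_eq_mul_div, lt_div_iff₀ hcpos]
      have := mul_lt_mul_of_pos_left hc2 hK
      linarith
    have e3 := mul_lt_mul_of_pos_right e2 hlam
    have e4 : K * L * lam = K * lam + K * ((n:ℝ) - 1) * Lam := by rw [mul_assoc, e1]; ring
    linarith
  refine visc_contra hlam hLam hsuper hxsΩ isOpen_univ (Set.mem_univ xs)
    (quad_cd (f xs) K (K ^ 2 / c) xs (y1 + t₀ • d) d p).contDiffOn d (K ^ 2 / c) K
    (fun x _ => quad_d1 (f xs) K (K ^ 2 / c) xs (y1 + t₀ • d) d p x)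
    (quad_d2 K (K ^ 2 / c) xs (y1 + t₀ • d) d p xs) (norm_pos_iff.1 hdpos) hK.le ?_ hpos ?_
  · rw [div_mul_eq_mul_div, le_div_iff₀ hcpos]
    linarith
  · filter_upwards [hf_lower] with x hx
    have e0 : K ^ 2 / c / 2 = K ^ 2 / (2 * c) := by field_simp
    have e1 : v x = f x + ⟪p, x⟫_ℝ - K / 2 * ‖x‖ ^ 2 := by simp only [hf]; ring
    have e2 : v xs = f xs + ⟪p, xs⟫_ℝ - K / 2 * ‖xs‖ ^ 2 := by simp only [hf]; ring
    rw [e0, e1, e2, sub_self, inner_zero_right, inner_zero_right, sub_zero, sub_zero,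
      real_inner_comm _ (y1 + t₀ • d), real_inner_comm _ d]
    clear_value f
    linarith


theorem bar_d0 {n : ℕ} (c x : Euc n) (hx : x ≠ c) (g : ℝ) :
    HasFDerivAt (fun x : Euc n => (‖x - c‖ ^ 2) ^ g)
      (innerSL ℝ ((2 * g * (‖x - c‖ ^ 2) ^ (g - 1)) • (x - c))) x := by
  have h0 : HasFDerivAt (fun x : Euc n => ‖x - c‖ ^ 2) ((2 : ℝ) • innerSL ℝ (x - c)) x := by
    have := ((hasStrictFDerivAt_norm_sq (x - c)).hasFDerivAt).comp x ((hasFDerivAt_id x).sub_const c)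
    refine this.congr_fderiv ?_
    ext w; simp
  have hne : ‖x - c‖ ^ 2 ≠ 0 := by
    have : 0 < ‖x - c‖ := norm_pos_iff.2 (sub_ne_zero.2 hx)
    positivity
  have := h0.rpow_const (p := g) (Or.inl hne)
  refine this.congr_fderiv ?_
  ext w
  simp
  ring

theorem bar_cd {n : ℕ} (K A b g : ℝ) (p xt c : Euc n) :
    ContDiffOn ℝ 2 (fun x : Euc n => b + ⟪p, x - xt⟫_ℝ - K / 2 * ‖x - xt‖ ^ 2
      + A * (‖x - c‖ ^ 2) ^ g) {c}ᶜ := by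
  have h0 : ∀ z : Euc n, ContDiff ℝ 2 fun x : Euc n => ‖x - z‖ ^ 2 := fun z =>
    (contDiff_id.sub contDiff_const).norm_sq ℝ
  have h1 : ∀ w z : Euc n, ContDiff ℝ 2 fun x : Euc n => ⟪w, x - z⟫_ℝ := fun w z =>
    contDiff_const.inner ℝ (contDiff_id.sub contDiff_const)
  refine ((contDiff_const.add (h1 _ _)).sub (contDiff_const.mul (h0 _))).contDiffOn.add
    (contDiffOn_const.mul ((h0 c).contDiffOn.rpow_const_of_ne ?_))
  intro x hx
  have : 0 < ‖x - c‖ := norm_pos_iff.2 (sub_ne_zero.2 hx)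
  positivity

theorem bar_d1 {n : ℕ} (K A b g : ℝ) (p xt c x : Euc n) (hx : x ≠ c) :
    HasFDerivAt (fun x : Euc n => b + ⟪p, x - xt⟫_ℝ - K / 2 * ‖x - xt‖ ^ 2
      + A * (‖x - c‖ ^ 2) ^ g)
      (innerSL ℝ (p - K • (x - xt) + (A * (2 * g * (‖x - c‖ ^ 2) ^ (g - 1))) • (x - c))) x := by
  have h0 : HasFDerivAt (fun x : Euc n => ‖x - xt‖ ^ 2) ((2 : ℝ) • innerSL ℝ (x - xt)) x := by
    have := ((hasStrictFDerivAt_norm_sq (x - xt)).hasFDerivAt).comp x ((hasFDerivAt_id x).sub_const xt)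
    refine this.congr_fderiv ?_
    ext w; simp
  have := (((inner_hasFDeriv p xt x).const_add b).sub (h0.const_mul (K / 2))).add
    ((bar_d0 c x hx g).const_mul A)
  refine this.congr_fderiv ?_
  ext w
  simp
  ring

theorem bar_d2 {n : ℕ} (K A g : ℝ) (p xt c x : Euc n) (hx : x ≠ c) :
    HasFDerivAt (fun x : Euc n => (p - K • (x - xt) + (A * (2 * g * (‖x - c‖ ^ 2) ^ (g - 1))) • (x - c)))
      ((4 * A * g * (g - 1) * (‖x - c‖ ^ 2) ^ (g - 2)) • (innerSL ℝ (x - c)).smulRight (x - c)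
        - (K - 2 * A * g * (‖x - c‖ ^ 2) ^ (g - 1)) • ContinuousLinearMap.id ℝ (Euc n)) x := by
  have h0 := (((bar_d0 c x hx (g - 1)).const_mul (2 * g)).const_mul A).smul
    ((hasFDerivAt_id x).sub_const c)
  have := ((((hasFDerivAt_id x).sub_const xt).const_smul K).const_sub p).add h0
  refine this.congr_fderiv ?_
  have e : g - 1 - 1 = g - 2 := by ring
  rw [e]
  ext w
  simp
  ring

theorem barrier {n : ℕ} (hn : 2 ≤ n) {lam Lam : ℝ} (hlam : 0 < lam) (hLam : lam ≤ Lam)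
    {Ω : Set (Euc n)} {v : Euc n → ℝ} (hv : ContinuousOn v Ω) (hsuper : ViscSupersol lam Lam Ω v)
    {K ρ R β : ℝ} (hK : 0 < K) (hρ : 0 < ρ) (hβ : β = ((n:ℝ) - 1) * Lam / lam)
    (c xt p : Euc n) (hball : closedBall c R ⊆ Ω)
    (hp : ∀ x ∈ Ω, v x ≥ v xt + ⟪p, x - xt⟫_ℝ - K / 2 * ‖x - xt‖ ^ 2)
    (hxt : ‖xt - c‖ < R) :
    ∃ x1, ‖x1 - c‖ ≤ ρ ∧
      v x1 - v xt - ⟪p, x1 - xt⟫_ℝ ≤ 3 * K * (R ^ 2) ^ (β / 2 + 1) * (ρ ^ 2) ^ (- (β / 2)) := by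
  by_contra! hcon
  have hn' : (2:ℝ) ≤ n := by exact_mod_cast hn
  have hβ1 : 1 ≤ β := by
    rw [hβ, le_div_iff₀ hlam]; nlinarith
  have hR : 0 < R := (norm_nonneg _).trans_lt hxt
  set A := 3 * K * (R ^ 2) ^ (β / 2 + 1) with hA
  have hApos : 0 < A := by positivity
  have hxtρ : ρ < ‖xt - c‖ := by
    by_contra! h
    have := hcon xt h
    have h2 : 0 < A * (ρ ^ 2) ^ (- (β / 2)) := by positivity
    simp at this
    linarith
  set g := - (β / 2) with hg
  set φ : Euc n → ℝ := fun x : Euc n => (v xt - A * (R ^ 2) ^ g) + ⟪p, x - xt⟫_ℝ - K / 2 * ‖x - xt‖ ^ 2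
      + A * (‖x - c‖ ^ 2) ^ g with hφ
  set S : Set (Euc n) := closedBall c R ∩ {x | ρ ≤ ‖x - c‖} with hS
  have hScomp : IsCompact S := by
    apply (isCompact_closedBall c R).inter_right
    exact isClosed_le continuous_const (by fun_prop)
  have hxtS : xt ∈ S := ⟨by rw [mem_closedBall, dist_eq_norm]; exact hxt.le, hxtρ.le⟩
  have hSne : ∀ x, ρ ≤ ‖x - c‖ → x ≠ c := by
    rintro x hx rfl; simp at hx; linarith
  have hcont : ContinuousOn (fun x => v x - φ x) S := by
    apply ContinuousOn.sub (hv.mono (Set.inter_subset_left.trans hball))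
    exact (bar_cd K A (v xt - A * (R ^ 2) ^ g) g p xt c).continuousOn.mono
      (fun x hx => hSne x hx.2)
  obtain ⟨x₀, hx₀, hmin⟩ := hScomp.exists_isMinOn ⟨xt, hxtS⟩ hcont
  have hneg : v x₀ - φ x₀ < 0 := by
    refine lt_of_le_of_lt (hmin hxtS) ?_
    have : (R ^ 2) ^ g < (‖xt - c‖ ^ 2) ^ g := by
      apply Real.rpow_lt_rpow_of_neg (by have := hρ.trans hxtρ; positivity) (by gcongr)
      rw [hg]; linarith
    have h2 := mul_lt_mul_of_pos_left this hApos
    simp only [hφ, sub_self, inner_zero_right, norm_zero]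
    linarith
  have hx₀ball : ‖x₀ - c‖ ≤ R := by have := hx₀.1; rwa [mem_closedBall, dist_eq_norm] at this
  have hx₀Ω : x₀ ∈ Ω := hball hx₀.1
  have hR' : ‖x₀ - c‖ < R := by
    refine lt_of_le_of_ne hx₀ball fun h => ?_
    have := hp x₀ hx₀Ω
    simp only [hφ, h] at hneg
    linarith
  have hρ' : ρ < ‖x₀ - c‖ := by
    refine lt_of_le_of_ne hx₀.2 fun h => ?_
    have := hcon x₀ h.symm.le
    have h2 : 0 < A * (R ^ 2) ^ g := by positivity
    have h3 : 0 ≤ K / 2 * ‖x₀ - xt‖ ^ 2 := by positivity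
    simp only [hφ, ← h] at hneg
    linarith
  have hne := hSne x₀ hx₀.2
  have hs : 0 < ‖x₀ - c‖ := hρ.trans hρ'
  set s := ‖x₀ - c‖ ^ 2 with hsdef
  have hspos : 0 < s := by positivity
  set T := s ^ (g - 1) with hT
  have hTpos : 0 < T := by positivity
  have hAT : 3 * K ≤ A * T := by
    have h1 : (R ^ 2) ^ (g - 1) ≤ T := by
      apply Real.rpow_le_rpow_of_nonpos hspos (by rw [hsdef]; gcongr)
      rw [hg]; linarith
    have h2 : (R ^ 2) ^ (β / 2 + 1) * (R ^ 2) ^ (g - 1) = 1 := by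
      rw [← Real.rpow_add (by positivity), hg]
      ring_nf
      simp
    calc 3 * K = 3 * K * ((R ^ 2) ^ (β / 2 + 1) * (R ^ 2) ^ (g - 1)) := by rw [h2]; ring
      _ = A * (R ^ 2) ^ (g - 1) := by rw [hA]; ring
      _ ≤ A * T := by gcongr
  have hTs : s ^ (g - 2) * s = T := by
    rw [hT, show g - 1 = (g - 2) + 1 by ring, Real.rpow_add_one hspos.ne']
  have hPT : 4 * A * g * (g - 1) * s ^ (g - 2) * ‖x₀ - c‖ ^ 2 = β * (β + 2) * (A * T) := by
    rw [← hsdef, mul_assoc _ _ s, hTs, hg]; ring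
  have hqT : K - 2 * A * g * T = K + β * (A * T) := by rw [hg]; ring
  have hβlam : ((n:ℝ) - 1) * Lam = β * lam := by rw [hβ]; field_simp
  refine visc_contra hlam hLam hsuper hx₀Ω (isOpen_compl_singleton (x := c)) hne
    (bar_cd K A (v xt - A * (R ^ 2) ^ g) g p xt c) (x₀ - c)
    _ _ (fun x hx => bar_d1 K A _ g p xt c x hx)
    (bar_d2 K A g p xt c x₀ hne) (sub_ne_zero.2 hne) ?_ ?_ ?_ ?_
  · rw [← hsdef, ← hT, hqT]; positivity
  · rw [hPT, ← hsdef, ← hT, hqT]; 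
    have h1 : 1 ≤ β * (β + 1) := by nlinarith
    have h2 : 3 * K ≤ β * (β + 1) * (A * T) :=
      hAT.trans (le_mul_of_one_le_left (by positivity) h1)
    have e : β * (β + 2) * (A * T) = β * (β + 1) * (A * T) + β * (A * T) := by ring
    linarith
  · rw [hPT, ← hsdef, ← hT, hqT, mul_assoc _ (_ - 1), hβlam]
    have e : (β * (β + 2) * (A * T) - (K + β * (A * T))) * lam - (K + β * (A * T)) * (β * lam)
      = lam * (β * (A * T) - K * (1 + β)) := by ring
    rw [e]
    apply mul_pos hlam
    have := mul_le_mul_of_nonneg_left hAT (show 0 ≤ β by positivity)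
    nlinarith
  · have hnhds : S ∈ nhds x₀ := by
      have o1 : IsOpen {x : Euc n | ‖x - c‖ < R ∧ ρ < ‖x - c‖} := by
        have hc : Continuous fun x : Euc n => ‖x - c‖ := by fun_prop
        exact (isOpen_lt hc continuous_const).inter (isOpen_lt continuous_const hc)
      refine Filter.mem_of_superset (o1.mem_nhds ⟨hR', hρ'⟩) ?_
      rintro x ⟨h1, h2⟩
      exact ⟨by rw [mem_closedBall, dist_eq_norm]; exact h1.le, h2.le⟩
    filter_upwards [mem_nhdsWithin_of_mem_nhds hnhds] with x hx
    exact hmin hx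


/-- closed cube -/
def ccube {n : ℕ} (c : Euc n) (r : ℝ) : Set (Euc n) := {x | ∀ i, |x i - c i| ≤ r / 2}

theorem norm_le_of_coord {n : ℕ} (x : Euc n) (a : ℝ) (ha : 0 ≤ a) (h : ∀ i, |x i| ≤ a) :
    ‖x‖ ≤ Real.sqrt n * a := by
  rw [EuclideanSpace.norm_eq]
  rw [Real.sqrt_le_left (by positivity), mul_pow, Real.sq_sqrt (by positivity)]
  calc ∑ i, ‖x i‖ ^ 2 ≤ ∑ _i : Fin n, a ^ 2 := by
        apply Finset.sum_le_sum
        intro i _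
        have := h i
        rw [Real.norm_eq_abs]
        gcongr
    _ = n * a ^ 2 := by simp

theorem coord_le_norm {n : ℕ} (x : Euc n) (i : Fin n) : |x i| ≤ ‖x‖ := by
  have := PiLp.norm_apply_le x i
  rwa [Real.norm_eq_abs] at this

theorem vol_euc {n : ℕ} (s : Set (Fin n → ℝ)) (hs : MeasurableSet s) :
    volume {x : Euc n | (fun i => x i) ∈ s} = volume s :=
  (PiLp.volume_preserving_ofLp (Fin n)).measure_preimage hs.nullMeasurableSet

theorem ccube_vol {n : ℕ} (c : Euc n) (r : ℝ) : volume (ccube c r) = ENNReal.ofReal r ^ n := by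
  have : ccube c r = {x : Euc n | (fun i => x i) ∈ Set.Icc (fun i => c i - r / 2) (fun i => c i + r / 2)} := by
    ext x
    simp only [ccube, Set.mem_ofPred_eq, Set.mem_Icc, Pi.le_def, abs_le, ← forall_and]
    refine forall_congr' fun i => ?_
    constructor <;> rintro ⟨h1, h2⟩ <;> constructor <;> linarith
  rw [this, vol_euc _ measurableSet_Icc, Real.volume_Icc_pi]
  have e : ∀ i, c i + r / 2 - (c i - r / 2) = r := fun i => by ring
  simp [e]

theorem ccube_closed {n : ℕ} (c : Euc n) (r : ℝ) : IsClosed (ccube c r) := by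
  have : ccube c r = ⋂ i, {x | |x i - c i| ≤ r / 2} := by
    ext x; simp [ccube]
  rw [this]
  apply isClosed_iInter
  intro i
  have hc : Continuous fun x : Euc n => |x i - c i| := by fun_prop
  exact isClosed_le hc continuous_const

theorem ccube_norm {n : ℕ} {c : Euc n} {r : ℝ} (hr : 0 ≤ r) {x : Euc n} (hx : x ∈ ccube c r) :
    ‖x - c‖ ≤ Real.sqrt n * (r / 2) :=
  norm_le_of_coord _ _ (by positivity) (fun i => by simpa using hx i)

theorem ccube_compact {n : ℕ} (c : Euc n) {r : ℝ} (hr : 0 ≤ r) : IsCompact (ccube c r) := by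
  refine (isCompact_closedBall c (Real.sqrt n * (r / 2))).of_isClosed_subset (ccube_closed c r) ?_
  intro x hx
  rw [mem_closedBall, dist_eq_norm]
  exact ccube_norm hr hx

theorem ccube_convex {n : ℕ} (c : Euc n) (r : ℝ) : Convex ℝ (ccube c r) := by
  intro x hx y hy a b ha hb hab i
  have h1 := hx i
  have h2 := hy i
  have e : (a • x + b • y) i - c i = a * (x i - c i) + b * (y i - c i) := by
    simp only [PiLp.add_apply, PiLp.smul_apply, smul_eq_mul]
    linear_combination (c i) * hab
  rw [e]
  calc |a * (x i - c i) + b * (y i - c i)| ≤ |a * (x i - c i)| + |b * (y i - c i)| := abs_add_le _ _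
    _ = a * |x i - c i| + b * |y i - c i| := by rw [abs_mul, abs_mul, abs_of_nonneg ha, abs_of_nonneg hb]
    _ ≤ a * (r / 2) + b * (r / 2) := by gcongr
    _ = r / 2 := by rw [← add_mul, hab, one_mul]

theorem contact_Gm {n : ℕ} {Ω : Set (Euc n)} {v : Euc n → ℝ} {K : ℝ} {p x y : Euc n} (hx : x ∈ Ω)
    (h : ∀ x' ∈ Ω,
      v x - ⟪p, x⟫_ℝ + K / 2 * ‖x - y‖ ^ 2 ≤ v x' - ⟪p, x'⟫_ℝ + K / 2 * ‖x' - y‖ ^ 2) :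
    x ∈ Gm K v Ω := by
  refine ⟨hx, p + K • (y - x), fun x' hx' => ?_⟩
  have h1 := h x' hx'
  have e : x' - y = (x' - x) - (y - x) := by abel
  have e2 : ‖x - y‖ = ‖y - x‖ := norm_sub_rev _ _
  rw [e, e2, norm_sub_sq_real (x' - x), real_inner_comm (y - x) (x' - x)] at h1
  rw [inner_add_left, inner_smul_left, inner_sub_right p]
  simp only [conj_trivial]
  linarith

theorem meas_step {n : ℕ} (hn : 2 ≤ n) {lam Lam : ℝ} (hlam : 0 < lam) (hLam : lam ≤ Lam)
    {Ω : Set (Euc n)} {v : Euc n → ℝ} (hv : ContinuousOn v Ω) (hsuper : ViscSupersol lam Lam Ω v)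
    {K r : ℝ} (hK : 0 < K) (hr : 0 < r) (c p x1 : Euc n) (hQ : ccube c r ⊆ Ω)
    (hx1 : ‖x1 - c‖ ≤ r / 8)
    (hfar : ∀ y, ‖y - c‖ ≤ r / 8 → ∀ x ∈ Ω, x ∉ ccube c r →
      v x1 - ⟪p, x1⟫_ℝ + K / 2 * ‖x1 - y‖ ^ 2 ≤ v x - ⟪p, x⟫_ℝ + K / 2 * ‖x - y‖ ^ 2) :
    volume (Am K v Ω ∩ ccube c r) ≤ ENNReal.ofReal
      ((1 - (lam / (lam + ((n : ℝ) - 1) * Lam)) ^ n * (1 / (4 * Real.sqrt n)) ^ n) * r ^ n) := by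
  have hn' : (2:ℝ) ≤ n := by exact_mod_cast hn
  have hsq : 0 < Real.sqrt n := Real.sqrt_pos.2 (by linarith)
  set L := 1 + ((n:ℝ) - 1) * Lam / lam with hL
  have hLp : 0 < L := by
    have : 0 ≤ ((n:ℝ) - 1) * Lam / lam := div_nonneg (mul_nonneg (by linarith) (by linarith)) hlam.le
    linarith
  have hL' : lam / (lam + ((n : ℝ) - 1) * Lam) = 1 / L := by
    rw [hL]; field_simp
  set Q := ccube c r with hQdef
  set V := ccube c (r / (4 * Real.sqrt n)) with hVdef
  have hVn : ∀ y ∈ V, ‖y - c‖ ≤ r / 8 := by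
    intro y hy
    refine (ccube_norm (by positivity) hy).trans (le_of_eq ?_)
    field_simp; norm_num
  have hQc : IsCompact Q := ccube_compact c hr.le
  have hVc : IsCompact V := ccube_compact c (by positivity)
  have hx1Q : x1 ∈ Q := by
    intro i
    have := coord_le_norm (x1 - c) i
    simp only [PiLp.sub_apply] at this
    linarith
  set F : Euc n → Euc n → ℝ := fun x y => v x - ⟪p, x⟫_ℝ + K / 2 * ‖x - y‖ ^ 2 with hF
  have hFc : ContinuousOn (fun z : Euc n × Euc n => F z.1 z.2) (Q ×ˢ V) := by
    have h1 : ContinuousOn (fun z : Euc n × Euc n => v z.1) (Q ×ˢ V) :=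
      (hv.mono hQ).comp continuousOn_fst (fun z hz => hz.1)
    apply ContinuousOn.add (h1.sub _) _ <;> fun_prop
  have hext : ∀ x ∈ Q, ∀ y ∈ V, (∀ x' ∈ Q, F x y ≤ F x' y) → ∀ x' ∈ Ω, F x y ≤ F x' y := by
    intro x hx y hy h x' hx'
    by_cases hq : x' ∈ Q
    · exact h x' hq
    · exact (h x1 hx1Q).trans (hfar y (hVn y hy) x' hx' hq)
  have hexists : ∀ y ∈ V, ∃ x ∈ Q, ∀ x' ∈ Q, F x y ≤ F x' y := by
    intro y hy
    have : ContinuousOn (fun x => F x y) Q := by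
      apply ContinuousOn.add ((hv.mono hQ).sub _) _ <;> fun_prop
    obtain ⟨x, hx, hm⟩ := hQc.exists_isMinOn ⟨x1, hx1Q⟩ this
    exact ⟨x, hx, fun x' hx' => hm hx'⟩
  set Z : Set (Euc n × Euc n) := ⋂ x' ∈ Q, {z ∈ Q ×ˢ V | F z.1 z.2 ≤ F x' z.2} with hZ
  have hZc : IsCompact Z := by
    refine (hQc.prod hVc).of_isClosed_subset ?_ ?_
    · refine isClosed_biInter fun x' hx' => ?_
      refine (ccube_closed _ _ |>.prod (ccube_closed _ _)).isClosed_le hFc ?_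
      apply Continuous.continuousOn
      simp only [hF]; fun_prop
    · intro z hz
      rw [hZ, Set.mem_iInter₂] at hz
      exact (hz x1 hx1Q).1
  set T := Prod.fst '' Z with hT
  have hTc : IsCompact T := hZc.image continuous_fst
  have hTmem : ∀ x, x ∈ T ↔ x ∈ Q ∧ ∃ y ∈ V, ∀ x' ∈ Q, F x y ≤ F x' y := by
    intro x
    constructor
    · rintro ⟨z, hz, rfl⟩
      rw [hZ, Set.mem_iInter₂] at hz
      exact ⟨(hz x1 hx1Q).1.1, z.2, (hz x1 hx1Q).1.2, fun x' hx' => (hz x' hx').2⟩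
    · rintro ⟨hx, y, hy, h⟩
      refine ⟨(x, y), ?_, rfl⟩
      rw [hZ, Set.mem_iInter₂]
      exact fun x' hx' => ⟨⟨hx, hy⟩, h x' hx'⟩
  have hY : ∀ x, ∃ y, x ∈ T → y ∈ V ∧ ∀ x' ∈ Q, F x y ≤ F x' y := by
    intro x
    by_cases hx : x ∈ T
    · obtain ⟨_, y, hy, h⟩ := (hTmem x).1 hx
      exact ⟨y, fun _ => ⟨hy, h⟩⟩
    · exact ⟨0, fun h => absurd h hx⟩
  choose Y hY using hY
  have hTQ : T ⊆ Q := fun x hx => ((hTmem x).1 hx).1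
  obtain ⟨R, hR⟩ := hQc.isBounded.exists_norm_le
  have hlip : ∀ x ∈ T, ∀ x' ∈ Q, ∀ y' ∈ V, (∀ x'' ∈ Q, F x' y' ≤ F x'' y') →
      ‖Y x - y'‖ ≤ L * ‖x - x'‖ := by
    intro x hx x' hx' y' hy' h
    refine contact_lip hn hlam hLam hsuper (R := R) hK p (ccube_convex c (r / (4 * Real.sqrt n))) ?_
      (hQ (hTQ hx)) (hQ hx') (hY x hx).1 hy' (hext x (hTQ hx) _ (hY x hx).1 (hY x hx).2)
      (hext x' hx' y' hy' h)
    intro y hy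
    obtain ⟨x, hx, h⟩ := hexists y hy
    exact ⟨x, hQ hx, hR x hx, hext x hx y hy h⟩
  have hLip : LipschitzOnWith (Real.toNNReal L) Y T := by
    apply LipschitzOnWith.of_dist_le_mul
    intro x hx x' hx'
    rw [Real.coe_toNNReal _ hLp.le, dist_eq_norm, dist_eq_norm]
    exact hlip x hx x' (hTQ hx') _ (hY x' hx').1 (hY x' hx').2
  have hVT : V ⊆ Y '' T := by
    intro y hy
    obtain ⟨x, hx, h⟩ := hexists y hy
    have hxT : x ∈ T := (hTmem x).2 ⟨hx, y, hy, h⟩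
    refine ⟨x, hxT, ?_⟩
    have := hlip x hxT x hx y hy h
    rw [sub_self, norm_zero, mul_zero] at this
    exact sub_eq_zero.1 (norm_le_zero_iff.1 this)
  have hvol : ENNReal.ofReal (r / (4 * Real.sqrt n)) ^ n ≤ ENNReal.ofReal L ^ n * volume T := by
    have h1 := vol_lip hLip
    have h2 := measure_mono (μ := volume) hVT
    rw [ccube_vol] at h2
    exact h2.trans h1
  have hTfin : volume T ≠ ⊤ := hTc.measure_lt_top.ne
  have hvolR : (r / (4 * Real.sqrt n)) ^ n ≤ L ^ n * (volume T).toReal := by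
    have := ENNReal.toReal_mono (ENNReal.mul_ne_top (ENNReal.pow_ne_top ENNReal.ofReal_ne_top) hTfin) hvol
    rwa [ENNReal.toReal_mul, ENNReal.toReal_pow, ENNReal.toReal_pow, ENNReal.toReal_ofReal hLp.le,
      ENNReal.toReal_ofReal (by positivity)] at this
  have hsub : Am K v Ω ∩ Q ⊆ Q \ T := by
    rintro x ⟨hxA, hxQ⟩
    refine ⟨hxQ, fun hxT => hxA.2 ?_⟩
    exact contact_Gm (p := p) (y := Y x) (hQ hxQ) (hext x hxQ _ (hY x hxT).1 (hY x hxT).2)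
  refine (measure_mono hsub).trans ?_
  rw [measure_sdiff hTQ hTc.measurableSet.nullMeasurableSet hTfin, ccube_vol, hL',
    ← ENNReal.ofReal_toReal hTfin, ← ENNReal.ofReal_pow hr.le,
    ← ENNReal.ofReal_sub _ ENNReal.toReal_nonneg]
  apply ENNReal.ofReal_le_ofReal
  have h3 : (1 / L) ^ n * (1 / (4 * Real.sqrt n)) ^ n * r ^ n ≤ (volume T).toReal := by
    have : (1 / L) ^ n * (1 / (4 * Real.sqrt n)) ^ n * r ^ n = (r / (4 * Real.sqrt n)) ^ n / L ^ n := by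
      rw [div_pow, div_pow, div_pow, one_pow]; field_simp
    rw [this, div_le_iff₀ (by positivity)]
    linarith
  linarith


theorem M_bound {n : ℕ} (hn : 2 ≤ n) (β : ℝ) (hβ : 1 ≤ β) {M : ℝ}
    (hM : M = 884736 * (n : ℝ) ^ 3 * (36 * (n : ℝ)) ^ (max (1 : ℝ) (β - 1))) :
    27 * n * (576 * (n:ℝ)) ^ (β / 2) * (64 / 9) + 49 / 2 * n ≤ 5 / 18 * M ∧ 8 ≤ M := by
  have hn' : (2:ℝ) ≤ n := by exact_mod_cast hn
  set α := max (1 : ℝ) (β - 1) with hα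
  have hα1 : 1 ≤ α := le_max_left _ _
  have hα2 : β ≤ α + 1 := by have := le_max_right (1:ℝ) (β - 1); linarith
  set X := (36 * (n : ℝ)) ^ α with hX
  have hX1 : 1 ≤ X := Real.one_le_rpow (by linarith) (by linarith)
  have h1 : (576 * (n:ℝ)) ^ (β / 2) ≤ 36 * n * X := by
    calc (576 * (n:ℝ)) ^ (β / 2) ≤ ((36 * (n:ℝ)) ^ (2:ℝ)) ^ (β / 2) := by
          apply Real.rpow_le_rpow (by positivity) _ (by linarith)
          rw [Real.rpow_two]; nlinarith
      _ = (36 * (n:ℝ)) ^ β := by rw [← Real.rpow_mul (by positivity)]; congr 1; ring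
      _ ≤ (36 * (n:ℝ)) ^ (α + 1) := Real.rpow_le_rpow_of_exponent_le (by linarith) hα2
      _ = 36 * n * X := by rw [Real.rpow_add_one (by positivity)]; ring
  have hn3 : (n:ℝ) ≤ n ^ 3 := by nlinarith [sq_nonneg ((n:ℝ) - 1)]
  have hn23 : (n:ℝ) ^ 2 ≤ n ^ 3 := by nlinarith [sq_nonneg ((n:ℝ))]
  have hN : 8 ≤ (n:ℝ) ^ 3 := by nlinarith
  have hNX : (n:ℝ) ^ 3 ≤ (n:ℝ) ^ 3 * X := le_mul_of_one_le_right (by positivity) hX1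
  have h2 : (n:ℝ) * (576 * (n:ℝ)) ^ (β / 2) ≤ 36 * ((n:ℝ) ^ 3 * X) := by
    calc (n:ℝ) * (576 * (n:ℝ)) ^ (β / 2) ≤ n * (36 * n * X) := by gcongr
      _ = 36 * ((n:ℝ) ^ 2 * X) := by ring
      _ ≤ _ := by gcongr
  have hM' : M = 884736 * ((n:ℝ) ^ 3 * X) := by rw [hM]; ring
  rw [hM']
  constructor
  · linarith
  · linarith

theorem far_coord {n : ℕ} {c x : Euc n} {r : ℝ} (h : x ∉ ccube c r) : r / 2 < ‖x - c‖ := by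
  simp only [ccube, Set.mem_ofPred_eq, not_forall, not_le] at h
  obtain ⟨i, hi⟩ := h
  have := coord_le_norm (x - c) i
  simp only [PiLp.sub_apply] at this
  linarith

theorem base_step {n : ℕ} (hn : 2 ≤ n) {lam Lam : ℝ} (hlam : 0 < lam) (hLam : lam ≤ Lam)
    {Ω : Set (Euc n)} {v : Euc n → ℝ} (hv : ContinuousOn v Ω) (hsuper : ViscSupersol lam Lam Ω v)
    (hB : closedBall 0 (2 * Real.sqrt n) ⊆ Ω) (hbd : ∀ x ∈ Ω, |v x| ≤ 1 / 4)
    {M : ℝ} (hM : 8 ≤ M) :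
    volume (Am M v Ω ∩ ccube 0 1) ≤ ENNReal.ofReal
      (1 - (lam / (lam + ((n : ℝ) - 1) * Lam)) ^ n * (1 / (4 * Real.sqrt n)) ^ n) := by
  have hQ : ccube (0 : Euc n) 1 ⊆ Ω := by
    intro x hx
    apply hB
    rw [mem_closedBall, dist_eq_norm]
    refine (ccube_norm zero_le_one hx).trans ?_
    have := Real.sqrt_nonneg (n:ℝ)
    linarith
  have h0 : (0 : Euc n) ∈ Ω := hB (mem_closedBall_self (by positivity))
  have := meas_step hn hlam hLam hv hsuper (K := M) (r := 1) (by linarith) one_pos 0 0 0 hQ (by simp)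
    (by
      intro y hy x hx hxQ
      have h1 := far_coord hxQ
      have h2 := (abs_le.1 (hbd x hx)).1
      have h3 := (abs_le.1 (hbd 0 h0)).2
      rw [sub_zero] at hy h1
      have h4 : 3 / 8 ≤ ‖x - y‖ := by have := norm_sub_norm_le x y; linarith
      have h5 : (3 / 8) ^ 2 ≤ ‖x - y‖ ^ 2 := by gcongr
      have h6 : ‖y‖ ^ 2 ≤ (1 / 8) ^ 2 := by gcongr
      have h7 : M / 2 * (3 / 8) ^ 2 ≤ M / 2 * ‖x - y‖ ^ 2 := by gcongr
      have h8 : M / 2 * ‖y‖ ^ 2 ≤ M / 2 * (1 / 8) ^ 2 := by gcongr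
      simp only [inner_zero_left, zero_sub, norm_neg, sub_zero]
      linarith)
  simpa using this

theorem key_step {n : ℕ} (hn : 2 ≤ n) {lam Lam : ℝ} (hlam : 0 < lam) (hLam : lam ≤ Lam)
    {Ω : Set (Euc n)} {v : Euc n → ℝ} (hv : ContinuousOn v Ω) (hsuper : ViscSupersol lam Lam Ω v)
    {K r M : ℝ} (hK : 0 < K) (hr : 0 < r) (c xt : Euc n)
    (hM : M = 884736 * (n : ℝ) ^ 3 * (36 * (n : ℝ)) ^ (max (1 : ℝ) (((n : ℝ) - 1) * Lam / lam - 1)))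
    (hball : closedBall c (3 * Real.sqrt n * r) ⊆ Ω) (hxt : xt ∈ Gm K v Ω)
    (hxtc : ∀ i, |xt i - c i| ≤ 3 / 2 * r) :
    volume (Am (M * K) v Ω ∩ ccube c r) ≤ ENNReal.ofReal
      ((1 - (lam / (lam + ((n : ℝ) - 1) * Lam)) ^ n * (1 / (4 * Real.sqrt n)) ^ n) * r ^ n) := by
  have hn' : (2:ℝ) ≤ n := by exact_mod_cast hn
  have hsq1 : 1 ≤ Real.sqrt n := Real.one_le_sqrt.2 (by linarith)
  set β := ((n : ℝ) - 1) * Lam / lam with hβ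
  have hβ1 : 1 ≤ β := by
    rw [hβ, le_div_iff₀ hlam]; nlinarith
  obtain ⟨hM1, hM8⟩ := M_bound hn β hβ1 hM
  obtain ⟨hxtΩ, p, hp⟩ := hxt
  have hxtn : ‖xt - c‖ ≤ Real.sqrt n * (3 / 2 * r) :=
    norm_le_of_coord _ _ (by positivity) (fun i => by simpa using hxtc i)
  have hQ : ccube c r ⊆ Ω := by
    intro x hx
    apply hball
    rw [mem_closedBall, dist_eq_norm]
    refine (ccube_norm hr.le hx).trans ?_
    nlinarith
  have hsr : 0 < Real.sqrt n * r := by positivity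
  obtain ⟨x1, hx1, hw⟩ := barrier hn hlam hLam hv hsuper hK (show 0 < r / 8 by linarith) hβ c xt p
    hball hp (by linarith)
  set C := 27 * n * (576 * (n:ℝ)) ^ (β / 2) with hC
  have hw' : v x1 - v xt - ⟪p, x1 - xt⟫_ℝ ≤ K * (C * r ^ 2) := by
    refine hw.trans (le_of_eq ?_)
    have e1 : (3 * Real.sqrt n * r) ^ 2 = 9 * n * r ^ 2 := by
      rw [mul_pow, mul_pow, Real.sq_sqrt (by positivity)]; ring
    have e2 : (9 * n * r ^ 2 : ℝ) = 576 * n * (r / 8) ^ 2 := by ring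
    rw [e1, Real.rpow_add_one (by positivity)]
    nth_rewrite 1 [e2]
    rw [Real.mul_rpow (by positivity) (by positivity), Real.rpow_neg (by positivity), hC]
    have : ((r / 8) ^ 2) ^ (β / 2) ≠ 0 := by positivity
    field_simp
    ring
  refine meas_step hn hlam hLam hv hsuper (K := M * K) (by positivity) hr c p x1 hQ hx1 ?_
  intro y hy x hx hxQ
  have h1 := far_coord hxQ
  have hd : 3 / 8 * r ≤ ‖x - y‖ := by
    have := norm_sub_le_norm_sub_add_norm_sub x y c
    linarith
  set d := ‖x - y‖ with hdd
  have hx1y : ‖x1 - y‖ ≤ r / 4 := by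
    have := norm_sub_le_norm_sub_add_norm_sub x1 c y
    rw [norm_sub_rev c y] at this
    linarith
  have hxxt : ‖x - xt‖ ≤ 7 * Real.sqrt n * d := by
    have t1 := norm_sub_le_norm_sub_add_norm_sub x y xt
    have t2 := norm_sub_le_norm_sub_add_norm_sub y c xt
    rw [norm_sub_rev c xt] at t2
    have t3 : Real.sqrt n * (3 / 8 * r) ≤ Real.sqrt n * d := by gcongr
    have t4 : d ≤ Real.sqrt n * d := le_mul_of_one_le_left (norm_nonneg _) hsq1
    linarith
  have hxxt2 : ‖x - xt‖ ^ 2 ≤ 49 * n * d ^ 2 := by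
    calc ‖x - xt‖ ^ 2 ≤ (7 * Real.sqrt n * d) ^ 2 := by gcongr
      _ = 49 * n * d ^ 2 := by rw [mul_pow, mul_pow, Real.sq_sqrt (by positivity)]; ring
  have hr2 : r ^ 2 ≤ 64 / 9 * d ^ 2 := by
    have : (3 / 8 * r) ^ 2 ≤ d ^ 2 := by gcongr
    linarith
  have hx1y2 : ‖x1 - y‖ ^ 2 ≤ 4 / 9 * d ^ 2 := by
    have : ‖x1 - y‖ ^ 2 ≤ (r / 4) ^ 2 := by gcongr
    linarith
  have hpx := hp x hx
  have hCp : 0 ≤ C := by positivity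
  have f1 : C * r ^ 2 ≤ C * (64 / 9 * d ^ 2) := by gcongr
  have f2 : M / 2 * ‖x1 - y‖ ^ 2 ≤ M / 2 * (4 / 9 * d ^ 2) := by gcongr
  have f3 : (C * (64 / 9) + 49 / 2 * n) * d ^ 2 ≤ 5 / 18 * M * d ^ 2 := by gcongr
  have f4 : C * r ^ 2 + 1 / 2 * ‖x - xt‖ ^ 2 + M / 2 * ‖x1 - y‖ ^ 2 ≤ M / 2 * d ^ 2 := by linarith
  have f5 := mul_le_mul_of_nonneg_left f4 hK.le
  rw [inner_sub_right] at hpx hw'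
  clear_value C d β
  linarith


theorem Gm_mono {n : ℕ} {K K' : ℝ} (h : K ≤ K') (v : Euc n → ℝ) (Ω : Set (Euc n)) :
    Gm K v Ω ⊆ Gm K' v Ω := by
  rintro x ⟨hx, p, hp⟩
  refine ⟨hx, p, fun x' hx' => ?_⟩
  have := hp x' hx'
  have h2 : K / 2 * ‖x' - x‖ ^ 2 ≤ K' / 2 * ‖x' - x‖ ^ 2 := by gcongr
  linarith

theorem Am_anti {n : ℕ} {K K' : ℝ} (h : K ≤ K') (v : Euc n → ℝ) (Ω : Set (Euc n)) :
    Am K' v Ω ⊆ Am K v Ω := fun _ hx => ⟨hx.1, fun hg => hx.2 (Gm_mono h v Ω hg)⟩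

theorem Am_open {n : ℕ} {Ω : Set (Euc n)} {v : Euc n → ℝ} (hΩ : IsOpen Ω) (hv : ContinuousOn v Ω)
    (hbd : ∀ x ∈ Ω, |v x| ≤ 1 / 4) (K : ℝ) : IsOpen (Am K v Ω) := by
  rw [isOpen_iff_mem_nhds]
  intro x₀ hx₀
  obtain ⟨ε, hε, hball⟩ := Metric.isOpen_iff.1 hΩ x₀ hx₀.1
  set δ := ε / 4 with hδ
  have hδp : 0 < δ := by positivity
  set Bd := (1 / 2 + K / 2 * δ ^ 2) / δ with hBd
  have hcb : closedBall x₀ δ ⊆ Ω := fun x hx => hball (by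
    rw [mem_closedBall] at hx; rw [mem_ball]; linarith)
  set S : Set (Euc n × Euc n) := ⋂ x' ∈ Ω, {z ∈ closedBall x₀ δ ×ˢ closedBall (0 : Euc n) Bd |
    v z.1 + ⟪z.2, x' - z.1⟫_ℝ - K / 2 * ‖x' - z.1‖ ^ 2 ≤ v x'} with hS
  have hSc : IsCompact S := by
    refine ((isCompact_closedBall x₀ δ).prod (isCompact_closedBall 0 Bd)).of_isClosed_subset ?_ ?_
    · refine isClosed_biInter fun x' hx' => ?_
      refine (isClosed_closedBall.prod isClosed_closedBall).isClosed_le ?_ continuousOn_const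
      have h1 : ContinuousOn (fun z : Euc n × Euc n => v z.1)
          (closedBall x₀ δ ×ˢ closedBall (0 : Euc n) Bd) :=
        (hv.mono hcb).comp continuousOn_fst (fun z hz => hz.1)
      apply ContinuousOn.sub (h1.add _) _ <;> fun_prop
    · intro z hz
      rw [hS, Set.mem_iInter₂] at hz
      exact (hz x₀ hx₀.1).1
  have hT : IsClosed (Prod.fst '' S) := (hSc.image continuous_fst).isClosed
  have hnot : x₀ ∉ Prod.fst '' S := by
    rintro ⟨z, hz, he⟩
    rw [hS, Set.mem_iInter₂] at hz
    apply hx₀.2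
    rw [← he]
    exact ⟨by rw [he]; exact hx₀.1, z.2, fun x' hx' => (hz x' hx').2⟩
  filter_upwards [hT.isOpen_compl.mem_nhds hnot, closedBall_mem_nhds x₀ hδp] with x hx hxb
  refine ⟨hcb hxb, ?_⟩
  rintro ⟨hxΩ, p, hp⟩
  apply hx
  refine ⟨(x, p), ?_, rfl⟩
  rw [hS, Set.mem_iInter₂]
  intro x' hx'
  refine ⟨⟨hxb, ?_⟩, hp x' hx'⟩
  rw [mem_closedBall, dist_zero_right, hBd, le_div_iff₀ hδp]
  by_cases hp0 : p = 0
  · subst hp0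
    have h2 : ∀ y ∈ Ω, 0 ≤ 1 / 2 + K / 2 * ‖y - x‖ ^ 2 := by
      intro y hy
      have := hp y hy
      rw [inner_zero_left] at this
      have h1 := abs_le.1 (hbd x hxΩ)
      have h2 := abs_le.1 (hbd y hy)
      linarith
    by_cases hK : 0 ≤ K
    · simp; positivity
    · by_cases hn : n = 0
      · subst hn
        exfalso
        apply hx₀.2
        refine ⟨hx₀.1, 0, fun y hy => ?_⟩
        rw [Subsingleton.elim y x₀]; simp
      · have i : Fin n := ⟨0, Nat.pos_of_ne_zero hn⟩
        have hy : x + δ • EuclideanSpace.single i (1:ℝ) ∈ Ω := by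
          apply hball
          rw [mem_closedBall] at hxb
          rw [mem_ball]
          have : dist (x + δ • EuclideanSpace.single i (1:ℝ)) x = δ := by
            rw [dist_eq_norm, add_sub_cancel_left, norm_smul, Real.norm_eq_abs, abs_of_pos hδp]
            simp
          have := dist_triangle (x + δ • EuclideanSpace.single i (1:ℝ)) x x₀
          linarith
        have := h2 _ hy
        rw [add_sub_cancel_left, norm_smul, Real.norm_eq_abs, abs_of_pos hδp] at this
        simpa using this
  · have hpp : 0 < ‖p‖ := norm_pos_iff.2 hp0
    have hnorm : ‖(δ / ‖p‖) • p‖ = δ := by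
      rw [norm_smul, Real.norm_eq_abs, abs_of_pos (by positivity)]; field_simp
    have hy : x + (δ / ‖p‖) • p ∈ Ω := by
      apply hball
      rw [mem_closedBall] at hxb
      rw [mem_ball]
      have e : dist (x + (δ / ‖p‖) • p) x = δ := by
        rw [dist_eq_norm, add_sub_cancel_left, hnorm]
      have := dist_triangle (x + (δ / ‖p‖) • p) x x₀
      linarith
    have := hp _ hy
    rw [add_sub_cancel_left, hnorm, inner_smul_right, real_inner_self_eq_norm_sq] at this
    have e : δ / ‖p‖ * ‖p‖ ^ 2 = ‖p‖ * δ := by field_simp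
    rw [e] at this
    have h1 := abs_le.1 (hbd x hxΩ)
    have h2 := abs_le.1 (hbd _ hy)
    linarith

def idx {n : ℕ} (j : ℕ) (x : Euc n) : Fin n → ℤ := fun i => ⌊(2:ℝ) ^ j * (x i + 1 / 2)⌋

def dy {n : ℕ} (j : ℕ) (z : Fin n → ℤ) : Set (Euc n) := {x | idx j x = z}

theorem mem_dy {n : ℕ} {j : ℕ} {z : Fin n → ℤ} {x : Euc n} :
    x ∈ dy j z ↔ ∀ i, (z i : ℝ) ≤ (2:ℝ) ^ j * (x i + 1 / 2) ∧ (2:ℝ) ^ j * (x i + 1 / 2) < z i + 1 := by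
  simp only [dy, idx, Set.mem_ofPred_eq, funext_iff, Int.floor_eq_iff]

theorem idx_succ {n : ℕ} (j : ℕ) (x : Euc n) (i : Fin n) : idx j x i = idx (j + 1) x i / 2 := by
  simp only [idx]
  rw [Int.floor_eq_iff]
  set y := (2:ℝ) ^ j * (x i + 1 / 2) with hy
  have e : (2:ℝ) ^ (j + 1) * (x i + 1 / 2) = 2 * y := by rw [hy, pow_succ]; ring
  rw [e]
  have h1 := Int.floor_le (2 * y)
  have h2 := Int.lt_floor_add_one (2 * y)
  set m := ⌊2 * y⌋
  have h3 : 2 * (m / 2) ≤ m := by omega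
  have h4 : m + 1 ≤ 2 * (m / 2) + 2 := by omega
  have h3' : 2 * ((m / 2 : ℤ) : ℝ) ≤ m := by exact_mod_cast h3
  have h4' : (m : ℝ) + 1 ≤ 2 * ((m / 2 : ℤ) : ℝ) + 2 := by exact_mod_cast h4
  constructor <;> linarith

theorem idx_mono {n : ℕ} {i j : ℕ} (hij : i ≤ j) {x y : Euc n} (h : idx j x = idx j y) :
    idx i x = idx i y := by
  induction j, hij using Nat.le_induction with
  | base => exact h
  | succ m hm ih =>
    apply ih
    funext k
    rw [idx_succ m x k, idx_succ m y k, h]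

theorem dy_meas_vol {n : ℕ} (j : ℕ) (z : Fin n → ℤ) : MeasurableSet (dy (n := n) j z) ∧
    volume (dy (n := n) j z) = ENNReal.ofReal ((((2:ℝ) ^ j)⁻¹) ^ n) := by
  have h2 : (0:ℝ) < 2 ^ j := by positivity
  have e : dy j z = {x : Euc n | (fun i => x i) ∈ Set.pi Set.univ fun i =>
      Set.Ico ((z i : ℝ) / 2 ^ j - 1 / 2) (((z i : ℝ) + 1) / 2 ^ j - 1 / 2)} := by
    ext x
    rw [mem_dy]
    simp only [Set.mem_ofPred_eq, Set.mem_pi, Set.mem_univ, true_imp_iff, Set.mem_Ico]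
    refine forall_congr' fun i => ?_
    rw [sub_le_iff_le_add, lt_sub_iff_add_lt, div_le_iff₀ h2, lt_div_iff₀ h2, mul_comm]
  have hm : MeasurableSet (Set.pi Set.univ fun i : Fin n =>
      Set.Ico ((z i : ℝ) / 2 ^ j - 1 / 2) (((z i : ℝ) + 1) / 2 ^ j - 1 / 2)) :=
    MeasurableSet.univ_pi fun i => measurableSet_Ico
  constructor
  · rw [e]
    exact (PiLp.volume_preserving_ofLp (Fin n)).measurable hm
  · rw [e, vol_euc _ hm, Real.volume_pi_Ico]
    have : ∀ i, ((z i : ℝ) + 1) / 2 ^ j - 1 / 2 - ((z i : ℝ) / 2 ^ j - 1 / 2) = ((2:ℝ) ^ j)⁻¹ := by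
      intro i; field_simp; ring
    simp only [this]
    rw [Finset.prod_const, Finset.card_univ, Fintype.card_fin, ENNReal.ofReal_pow (by positivity)]

theorem covering {n : ℕ} (A B : Set (Euc n)) (σ : ℝ≥0∞) (hAB : A ⊆ B) (hB0 : B ⊆ dy 0 0)
    (h1 : ∀ x ∈ B, ∃ j, dy j (idx j x) ⊆ B) (h2 : volume A ≤ σ)
    (h3 : ∀ j, ∀ x ∈ dy 0 0, ¬ dy j (idx j x) ⊆ B →
      volume (A ∩ dy (j + 1) (idx (j + 1) x)) ≤ σ * volume (dy (j + 1) (idx (j + 1) x))) :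
    volume A ≤ σ * volume B := by
  classical
  by_cases hQ : dy 0 0 ⊆ B
  · have : B = dy 0 0 := hB0.antisymm hQ
    rw [this, (dy_meas_vol 0 0).2]
    simpa using h2
  set J : Euc n → ℕ := fun x => if h : ∃ j, dy j (idx j x) ⊆ B then Nat.find h else 0 with hJ
  set D : ℕ × (Fin n → ℤ) → Set (Euc n) := fun q => {x | x ∈ B ∧ J x = q.1 ∧ idx q.1 x = q.2} with hD
  have hJs : ∀ x ∈ B, dy (J x) (idx (J x) x) ⊆ B ∧ ∀ i < J x, ¬ dy i (idx i x) ⊆ B := by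
    intro x hx
    have h := h1 x hx
    simp only [hJ, dif_pos h]
    exact ⟨Nat.find_spec h, fun i hi => Nat.find_min h hi⟩
  have hDeq : ∀ q, ∀ x ∈ D q, D q = dy q.1 q.2 := by
    rintro ⟨j, z⟩ x ⟨hxB, hxJ, hxz⟩
    simp only at hxJ hxz
    ext y
    constructor
    · rintro ⟨_, _, h⟩; exact h
    · intro hy
      have hy' : idx j y = z := hy
      obtain ⟨s1, s2⟩ := hJs x hxB
      rw [hxJ] at s1 s2
      rw [hxz] at s1
      have hyB := s1 hy
      refine ⟨hyB, ?_, hy'⟩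
      obtain ⟨t1, t2⟩ := hJs y hyB
      have hid : ∀ i ≤ j, idx i y = idx i x := fun i hi => idx_mono hi (hy'.trans hxz.symm)
      apply le_antisymm
      · by_contra! hlt
        apply t2 j hlt
        rw [hy']; exact s1
      · by_contra! hlt
        apply s2 _ hlt
        rw [← hid _ hlt.le]; exact t1
  have hDm : ∀ q, MeasurableSet (D q) := by
    intro q
    rcases Set.eq_empty_or_nonempty (D q) with h | ⟨x, hx⟩
    · rw [h]; exact MeasurableSet.empty
    · rw [hDeq q x hx]; exact (dy_meas_vol _ _).1
  have hDd : Pairwise (Function.onFun Disjoint D) := by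
    intro q q' hne
    rw [Function.onFun, Set.disjoint_left]
    rintro x ⟨_, a1, a2⟩ ⟨_, b1, b2⟩
    apply hne
    have e : q.1 = q'.1 := a1.symm.trans b1
    ext1
    · exact e
    · rw [← a2, ← b2, e]
  have hU : B = ⋃ q, D q := by
    ext x
    simp only [Set.mem_iUnion]
    constructor
    · intro hx; exact ⟨(J x, idx (J x) x), hx, rfl, rfl⟩
    · rintro ⟨q, hx, _⟩; exact hx
  have hq : ∀ q, volume (A ∩ D q) ≤ σ * volume (D q) := by
    intro q
    rcases Set.eq_empty_or_nonempty (D q) with h | ⟨x, hx⟩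
    · rw [h]; simp
    · have hx' := hx
      obtain ⟨hxB, hxJ, hxz⟩ := hx'
      rw [hDeq q x hx]
      obtain ⟨s1, s2⟩ := hJs x hxB
      have hJ0 : J x ≠ 0 := by
        intro h0
        rw [h0] at s1
        apply hQ
        have : idx 0 x = 0 := hB0 hxB
        rwa [this] at s1
      obtain ⟨j, hj⟩ := Nat.exists_eq_succ_of_ne_zero hJ0
      have := h3 j x (hB0 hxB) (s2 j (by omega))
      rw [← hxz, ← hxJ, hj]
      exact this
  calc volume A = volume (⋃ q, A ∩ D q) := by
        rw [← Set.inter_iUnion, ← hU, Set.inter_eq_left.2 hAB]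
    _ ≤ ∑' q, volume (A ∩ D q) := measure_iUnion_le _
    _ ≤ ∑' q, σ * volume (D q) := ENNReal.tsum_le_tsum hq
    _ = σ * volume B := by rw [ENNReal.tsum_mul_left, ← measure_iUnion hDd hDm, ← hU]


theorem dy0_bound {n : ℕ} {x : Euc n} (hx : x ∈ dy 0 0) (i : Fin n) : -(1 / 2) ≤ x i ∧ x i < 1 / 2 := by
  have := mem_dy.1 hx i
  simp at this
  constructor <;> linarith [this.1, this.2]

theorem dy0_sub {n : ℕ} : dy (n := n) 0 0 ⊆ ccube 0 1 := by
  intro x hx i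
  have := dy0_bound hx i
  simp only [PiLp.zero_apply, sub_zero]
  rw [abs_le]
  constructor <;> linarith [this.1, this.2]

theorem cube_sub {n : ℕ} : cube (n := n) 1 0 ⊆ dy 0 0 := by
  intro x hx
  rw [mem_dy]
  intro i
  have := abs_lt.1 (hx i)
  simp at this ⊢
  constructor <;> linarith [this.1, this.2]

theorem dy_nest {n : ℕ} {x y : Euc n} (hx : x ∈ dy 0 0) {j : ℕ} (hy : y ∈ dy j (idx j x)) :
    y ∈ dy 0 0 := by
  have h : idx j y = idx j x := hy
  exact (idx_mono (Nat.zero_le j) h).trans hx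

theorem dy_small {n : ℕ} {x : Euc n} {U : Set (Euc n)} (hU : IsOpen U) (hx : x ∈ U) :
    ∃ j, dy j (idx j x) ⊆ U := by
  obtain ⟨ε, hε, hball⟩ := Metric.isOpen_iff.1 hU x hx
  obtain ⟨j, hj⟩ := exists_pow_lt_of_lt_one (show 0 < ε / (Real.sqrt n + 1) by positivity)
    (show (1/2 : ℝ) < 1 by norm_num)
  refine ⟨j, fun y hy => hball ?_⟩
  have hx' := mem_dy.1 (show x ∈ dy j (idx j x) from rfl)
  have hy' := mem_dy.1 hy
  have h2 : (0:ℝ) < 2 ^ j := by positivity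
  rw [lt_div_iff₀ (by positivity)] at hj
  have hp : (0:ℝ) < (1 / 2) ^ j := by positivity
  have hmul : (2:ℝ) ^ j * (1 / 2) ^ j = 1 := by rw [← mul_pow]; norm_num
  rw [mem_ball, dist_eq_norm]
  refine (norm_le_of_coord (y - x) ((1 / 2) ^ j) hp.le ?_).trans_lt (by linarith)
  intro i
  simp only [PiLp.sub_apply]
  have a := hx' i
  have b := hy' i
  rw [abs_le]
  constructor
  · by_contra! h
    have := mul_lt_mul_of_pos_left h h2
    linarith
  · by_contra! h
    have := mul_lt_mul_of_pos_left h h2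
    linarith

theorem iter_step {n : ℕ} (hn : 2 ≤ n) {lam Lam : ℝ} (hlam : 0 < lam) (hLam : lam ≤ Lam)
    {Ω : Set (Euc n)} (hΩ : IsOpen Ω) (hB : closedBall 0 (2 * Real.sqrt n) ⊆ Ω)
    {v : Euc n → ℝ} (hv : ContinuousOn v Ω) (hsuper : ViscSupersol lam Lam Ω v)
    (hbd : ∀ x ∈ Ω, |v x| ≤ 1 / 4) {M K : ℝ} (hK : 1 ≤ K)
    (hM : M = 884736 * (n : ℝ) ^ 3 * (36 * (n : ℝ)) ^ (max (1 : ℝ) (((n : ℝ) - 1) * Lam / lam - 1)))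
    (hM8 : 8 ≤ M) {σ : ℝ}
    (hσ : σ = 1 - (lam / (lam + ((n : ℝ) - 1) * Lam)) ^ n * (1 / (4 * Real.sqrt n)) ^ n)
    (hσ0 : 0 ≤ σ) :
    volume (Am (M * K) v Ω ∩ dy 0 0) ≤ ENNReal.ofReal σ * volume (Am K v Ω ∩ dy 0 0) := by
  have hMK : K ≤ M * K := le_mul_of_one_le_left (by linarith) (by linarith)
  have hMM : M ≤ M * K := le_mul_of_one_le_right (by linarith) hK
  have hdyΩ : dy (n := n) 0 0 ⊆ Ω := by
    intro x hx
    apply hB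
    rw [mem_closedBall, dist_eq_norm]
    refine (ccube_norm zero_le_one (dy0_sub hx)).trans ?_
    have := Real.sqrt_nonneg (n:ℝ)
    linarith
  apply covering
  · exact Set.inter_subset_inter_left _ (Am_anti hMK v Ω)
  · exact Set.inter_subset_right
  · rintro x ⟨hxA, hx0⟩
    obtain ⟨j, hj⟩ := dy_small (Am_open hΩ hv hbd K) hxA
    exact ⟨j, fun y hy => ⟨hj hy, dy_nest hx0 hy⟩⟩
  · refine (measure_mono (Set.inter_subset_inter (Am_anti hMM v Ω) dy0_sub)).trans ?_
    rw [hσ]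
    exact base_step hn hlam hLam hv hsuper hB hbd hM8
  · intro j x hx hnot
    obtain ⟨xt, hxt, hxtB⟩ := Set.not_subset.1 hnot
    have hxt0 := dy_nest hx hxt
    have hxtG : xt ∈ Gm K v Ω := by
      by_contra h
      exact hxtB ⟨⟨hdyΩ hxt0, h⟩, hxt0⟩
    set z := idx (j + 1) x with hz
    set r : ℝ := ((2:ℝ) ^ (j + 1))⁻¹ with hr
    have h2 : (0:ℝ) < 2 ^ (j + 1) := by positivity
    have hrp : 0 < r := by positivity
    have hr2 : (2:ℝ) ^ (j + 1) * r = 1 := mul_inv_cancel₀ h2.ne'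
    have hrhalf : r ≤ 1 / 2 := by
      have : (2:ℝ) ≤ 2 ^ (j + 1) := by
        rw [pow_succ]; have := one_le_pow₀ (M₀ := ℝ) (a := 2) (n := j) (by norm_num); linarith
      nlinarith
    set c : Euc n := WithLp.toLp 2 (fun i => ((z i : ℝ) + 1 / 2) * r - 1 / 2) with hc
    have hci : ∀ i, c i = ((z i : ℝ) + 1 / 2) * r - 1 / 2 := fun i => rfl
    have hbd : ∀ y : Euc n, ∀ i, y i + 1 / 2 = (2:ℝ) ^ (j + 1) * (y i + 1 / 2) * r := by
      intro y i
      linear_combination (-(y i + 1 / 2)) * hr2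
    have hsub : dy (j + 1) z ⊆ ccube c r := by
      intro y hy i
      have hy' := mem_dy.1 hy i
      have e := hbd y i
      rw [hci, abs_le]
      have a1 := mul_le_mul_of_nonneg_right hy'.1 hrp.le
      have a2 := mul_le_mul_of_nonneg_right hy'.2.le hrp.le
      constructor <;> linarith
    have hxtc : ∀ i, |xt i - c i| ≤ 3 / 2 * r := by
      intro i
      have hxt' := mem_dy.1 hxt i
      have hs := idx_succ j x i
      rw [← hz] at hs
      have b1 : z i - 1 ≤ 2 * idx j x i := by omega
      have b2 : 2 * idx j x i ≤ z i := by omega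
      have b1' : (z i : ℝ) - 1 ≤ 2 * (idx j x i : ℝ) := by exact_mod_cast b1
      have b2' : 2 * (idx j x i : ℝ) ≤ z i := by exact_mod_cast b2
      have e := hbd xt i
      have e2 : (2:ℝ) ^ (j + 1) * (xt i + 1 / 2) = 2 * ((2:ℝ) ^ j * (xt i + 1 / 2)) := by
        rw [pow_succ]; ring
      have a1 : ((z i : ℝ) - 1) * r ≤ (2:ℝ) ^ (j + 1) * (xt i + 1 / 2) * r := by
        apply mul_le_mul_of_nonneg_right _ hrp.le
        rw [e2]; linarith [hxt'.1]
      have a2 : (2:ℝ) ^ (j + 1) * (xt i + 1 / 2) * r ≤ ((z i : ℝ) + 2) * r := by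
        apply mul_le_mul_of_nonneg_right _ hrp.le
        rw [e2]; linarith [hxt'.2]
      rw [hci, abs_le]
      constructor <;> linarith
    have hcn : ‖c‖ ≤ Real.sqrt n * (1 / 2) := by
      apply norm_le_of_coord _ _ (by norm_num)
      intro i
      have hx0 := dy0_bound hx i
      have hxz := mem_dy.1 (show x ∈ dy (j + 1) z from rfl) i
      have b1 : 0 ≤ z i := by
        rw [hz]; apply Int.floor_nonneg.2
        exact mul_nonneg h2.le (by linarith)
      have b2 : z i + 1 ≤ 2 ^ (j + 1) := by
        have : (z i : ℝ) < 2 ^ (j + 1) := by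
          refine hxz.1.trans_lt ?_
          have := mul_lt_mul_of_pos_left (show x i + 1 / 2 < 1 by linarith) h2
          linarith
        have : z i < 2 ^ (j + 1) := by exact_mod_cast this
        omega
      have b1' : (0:ℝ) ≤ z i := by exact_mod_cast b1
      have b2' : (z i : ℝ) + 1 ≤ 2 ^ (j + 1) := by exact_mod_cast b2
      have a1 : 0 ≤ (z i : ℝ) * r := by positivity
      have a2 := mul_le_mul_of_nonneg_right b2' hrp.le
      rw [hci, abs_le]
      constructor <;> linarith
    have hball : closedBall c (3 * Real.sqrt n * r) ⊆ Ω := by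
      intro y hy
      apply hB
      rw [mem_closedBall, dist_eq_norm] at hy
      rw [mem_closedBall, dist_zero_right]
      have t := norm_le_norm_add_norm_sub' y c
      have : Real.sqrt n * r ≤ Real.sqrt n * (1 / 2) := by gcongr
      linarith
    have := key_step hn hlam hLam hv hsuper (by linarith) hrp c xt hM hball hxtG hxtc
    rw [← hσ] at this
    rw [(dy_meas_vol (j + 1) z).2, ← ENNReal.ofReal_mul hσ0]
    refine le_trans (measure_mono ?_) this
    rintro y ⟨⟨hy1, _⟩, hy2⟩
    exact ⟨hy1, hsub hy2⟩

theorem sigma_nonneg {n : ℕ} (hn : 2 ≤ n) {lam Lam : ℝ} (hlam : 0 < lam) (hLam : lam ≤ Lam) :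
    0 ≤ 1 - (lam / (lam + ((n : ℝ) - 1) * Lam)) ^ n * (1 / (4 * Real.sqrt n)) ^ n := by
  have hn' : (2:ℝ) ≤ n := by exact_mod_cast hn
  have hsq1 : 1 ≤ Real.sqrt n := Real.one_le_sqrt.2 (by linarith)
  have h0 : 0 ≤ ((n : ℝ) - 1) * Lam := mul_nonneg (by linarith) (by linarith)
  have h1 : (lam / (lam + ((n : ℝ) - 1) * Lam)) ^ n ≤ 1 := by
    apply pow_le_one₀ (by positivity)
    rw [div_le_one (by positivity)]; linarith
  have h2 : (1 / (4 * Real.sqrt n)) ^ n ≤ 1 := by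
    apply pow_le_one₀ (by positivity)
    rw [div_le_one (by positivity)]; linarith
  have := mul_le_one₀ h1 (by positivity) h2
  linarith

theorem final {n : ℕ} (hn : 2 ≤ n) {lam Lam : ℝ} (hlam : 0 < lam) (hLam : lam ≤ Lam)
    {Ω : Set (Euc n)} (hΩ : IsOpen Ω) (hB : closedBall 0 (2 * Real.sqrt n) ⊆ Ω)
    {v : Euc n → ℝ} (hv : ContinuousOn v Ω) (hsuper : ViscSupersol lam Lam Ω v)
    (hbd : ∀ x ∈ Ω, |v x| ≤ 1 / 4) {M σ : ℝ}
    (hM : M = 884736 * (n : ℝ) ^ 3 * (36 * (n : ℝ)) ^ (max (1 : ℝ) (((n : ℝ) - 1) * Lam / lam - 1)))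
    (hσ : σ = 1 - (lam / (lam + ((n : ℝ) - 1) * Lam)) ^ n * (1 / (4 * Real.sqrt n)) ^ n) (k : ℕ) :
    volume (Am (M ^ k) v Ω ∩ dy 0 0) ≤ ENNReal.ofReal (σ ^ k) := by
  have hn' : (2:ℝ) ≤ n := by exact_mod_cast hn
  have hβ1 : 1 ≤ ((n : ℝ) - 1) * Lam / lam := by
    rw [le_div_iff₀ hlam]; nlinarith
  have hM8 := (M_bound hn _ hβ1 hM).2
  have hσ0 : 0 ≤ σ := by rw [hσ]; exact sigma_nonneg hn hlam hLam
  induction k with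
  | zero =>
    refine (measure_mono Set.inter_subset_right).trans ?_
    rw [(dy_meas_vol 0 0).2]; simp
  | succ k ih =>
    rw [pow_succ' M, pow_succ' σ, ENNReal.ofReal_mul hσ0]
    refine (iter_step hn hlam hLam hΩ hB hv hsuper hbd (one_le_pow₀ (by linarith)) hM hM8 hσ hσ0).trans ?_
    gcongr


/-- geometric decay |A⁻_{M^k}(v,Ω) ∩ Q₁| ≤ σ^k with explicit σ and M. -/
theorem stmt_11 (n : ℕ) (hn : 2 ≤ n) (lam Lam : ℝ) (hlam : 0 < lam) (hLam : lam ≤ Lam)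
    (Ω : Set (Euc n)) (hΩ : IsOpen Ω) (hB : closedBall 0 (2 * Real.sqrt n) ⊆ Ω)
    (v : Euc n → ℝ) (hv : ContinuousOn v Ω) (hsuper : ViscSupersol lam Lam Ω v)
    (hbd : ∀ x ∈ Ω, |v x| ≤ 1 / 4) :
    ∀ k : ℕ,
      volume (Am ((884736 * (n : ℝ) ^ 3 *
          (36 * (n : ℝ)) ^ (max (1 : ℝ) (((n : ℝ) - 1) * Lam / lam - 1))) ^ k) v Ω ∩ cube 1 0)
        ≤ ENNReal.ofReal
            ((1 - (lam / (lam + ((n : ℝ) - 1) * Lam)) ^ n * (1 / (4 * Real.sqrt n)) ^ n) ^ k) := by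
  intro k
  exact (measure_mono (Set.inter_subset_inter_right _ cube_sub)).trans
    (final hn hlam hLam hΩ hB hv hsuper hbd rfl rfl k)
end
end
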